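/- arXiv:2406.08400 — 5 statements merged into one kernel-verified Lean document; each statement's English description precedes it below -/
import Mathlib

section
/- For every real number x ≥ 0 and every θ ∈ [0,1] one has cosh(x) − 1 ≤ x^{2θ}·cosh(x). -/
/-! The quantity `1 - 1 / cosh x` lies in `[0, 1]`, and since `cosh x ≤ exp (x ^ 2 / 2)` it is at
most `1 - exp (-x ^ 2 / 2) ≤ x ^ 2 / 2`. Interpolating the two upper bounds `1` and `x ^ 2 / 2`
with weights `1 - θ` and `θ` gives the factor `(x ^ 2 / 2) ^ θ`. -/

theorem le_rpow_of_le_of_le_one {a b θ : ℝ} (ha : 0 ≤ a) (hab : a ≤ b) (ha_one : a ≤ 1)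
    (hθ : θ ∈ Set.Icc (0 : ℝ) 1) : a ≤ b ^ θ :=
  calc
    a ≤ a ^ θ := Real.self_le_rpow_of_le_one ha ha_one hθ.2
    _ ≤ b ^ θ := Real.rpow_le_rpow ha hab hθ.1

theorem one_sub_inv_cosh_le_half_sq (x : ℝ) : 1 - (Real.cosh x)⁻¹ ≤ x ^ 2 / 2 := by
  have exp_neg_le_inv_cosh : Real.exp (-(x ^ 2 / 2)) ≤ (Real.cosh x)⁻¹ := by
    rw [Real.exp_neg]
    exact inv_anti₀ (Real.cosh_pos x) (Real.cosh_le_exp_half_sq x)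
  linarith [Real.one_sub_le_exp_neg (x ^ 2 / 2)]

theorem cosh_sub_one_le_general (x : ℝ) {θ : ℝ} (hθ : θ ∈ Set.Icc (0 : ℝ) 1) :
    Real.cosh x - 1 ≤ (x ^ 2 / 2) ^ θ * Real.cosh x := by
  have one_sub_inv_nonneg : 0 ≤ 1 - (Real.cosh x)⁻¹ :=
    sub_nonneg.2 (inv_le_one_of_one_le₀ (Real.one_le_cosh x))
  have one_sub_inv_le_one : 1 - (Real.cosh x)⁻¹ ≤ 1 :=
    sub_le_self 1 (inv_nonneg.2 (Real.cosh_pos x).le)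
  calc
    Real.cosh x - 1 = (1 - (Real.cosh x)⁻¹) * Real.cosh x := by
      rw [sub_mul, one_mul, inv_mul_cancel₀ (Real.cosh_pos x).ne']
    _ ≤ (x ^ 2 / 2) ^ θ * Real.cosh x :=
      mul_le_mul_of_nonneg_right
        (le_rpow_of_le_of_le_one one_sub_inv_nonneg (one_sub_inv_cosh_le_half_sq x)
          one_sub_inv_le_one hθ)
        (Real.cosh_pos x).le

/-- For every real `x ≥ 0` and every `θ ∈ [0,1]` one has
`cosh x − 1 ≤ x^(2θ)·cosh x`. -/
theorem cosh_sub_one_le (x θ : ℝ) (hx : 0 ≤ x) (hθ : θ ∈ Set.Icc (0 : ℝ) 1) :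
    Real.cosh x - 1 ≤ x ^ (2 * θ) * Real.cosh x := by
  rw [Real.rpow_mul hx, Real.rpow_two]
  exact (cosh_sub_one_le_general x hθ).trans <| mul_le_mul_of_nonneg_right
    (Real.rpow_le_rpow (by positivity) (half_le_self (sq_nonneg x)) hθ.1) (Real.cosh_pos x).le
end

section
/- Let p ≥ 1 be an integer, let ξ₁, …, ξ_p be real numbers and set ξ = ξ₁ + ⋯ + ξ_p. Then |1 − cosh(|ξ|)·∏_{j=1}^p sech(|ξ_j|)| ≤ 2^p · Σ_{j ≠ k, 1 ≤ j,k ≤ p} |ξ_j||ξ_k|, where the sum is over all ordered pairs (j,k) with j ≠ k. -/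
/-!
Write `P` for the product of the `cosh (ξ i)` and `S` for the sum of the `ξ i`. Adjoining one more
number `x` changes the defect `P - cosh S` into `cosh x * (P - cosh S) - sinh x * sinh S`, by the
addition formula. The new term is controlled by `|sinh x| ≤ |x| * cosh x`, used at `x` and at `S`,
and by `cosh S ≤ 2 ^ n * P`: relative to the new product it is at most
`2 ^ n * |x| * ∑ |ξ i|`, which is what the pairs containing the new index pay for.
-/

open Finset Real

lemma abs_sinh_le_cosh (x : ℝ) : |sinh x| ≤ cosh x := by
  rw [abs_sinh, ← cosh_abs]
  exact (sinh_lt_cosh |x|).le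

-- Mean value inequality: `cosh`, the derivative of `sinh`, is at most `cosh x` where `|y| ≤ |x|`.
lemma abs_sinh_le_abs_mul_cosh (x : ℝ) : |sinh x| ≤ |x| * cosh x := by
  have deriv_le : ∀ y ∈ Metric.closedBall (0 : ℝ) |x|, ‖cosh y‖ ≤ cosh x := fun y hy ↦ by
    rw [norm_of_nonneg (cosh_pos y).le, cosh_le_cosh]
    simpa using hy
  have mean_value := (convex_closedBall (0 : ℝ) |x|).norm_image_sub_le_of_norm_hasDerivWithin_le
    (fun y _ ↦ (hasDerivAt_sinh y).hasDerivWithinAt) deriv_le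
    (Metric.mem_closedBall_self (abs_nonneg x)) (y := x) (by simp)
  simpa [mul_comm] using mean_value

lemma cosh_add_le_two_mul_cosh_mul_cosh (x y : ℝ) : cosh (x + y) ≤ 2 * (cosh x * cosh y) := by
  have sinh_mul_le : sinh x * sinh y ≤ cosh x * cosh y :=
    calc sinh x * sinh y ≤ |sinh x| * |sinh y| := (le_abs_self _).trans_eq (abs_mul _ _)
      _ ≤ cosh x * cosh y :=
        mul_le_mul (abs_sinh_le_cosh x) (abs_sinh_le_cosh y) (abs_nonneg _) (cosh_pos x).le
  rw [cosh_add]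
  linarith

section OffDiag

variable {ι R : Type*} [DecidableEq ι]

lemma sum_offDiag_eq_sum_sum_ite [AddCommMonoid R] (s : Finset ι) (f : ι → ι → R) :
    ∑ q ∈ s.offDiag, f q.1 q.2 = ∑ i ∈ s, ∑ j ∈ s, if i ≠ j then f i j else 0 := by
  rw [← sum_product', ← sum_filter]
  congr 1
  ext q
  simp [and_assoc]

lemma sum_offDiag_mul_insert [CommSemiring R] {s : Finset ι} {a : ι} (ha : a ∉ s) (f : ι → R) :
    ∑ q ∈ (insert a s).offDiag, f q.1 * f q.2 =
      ∑ q ∈ s.offDiag, f q.1 * f q.2 + 2 * (f a * ∑ i ∈ s, f i) := by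
  have disjoint_first : Disjoint s.offDiag ({a} ×ˢ s) := by
    rw [Finset.disjoint_left]
    grind
  have disjoint_last : Disjoint (s.offDiag ∪ {a} ×ˢ s) (s ×ˢ {a}) := by
    rw [Finset.disjoint_left]
    grind
  rw [offDiag_insert ha, sum_union disjoint_last, sum_union disjoint_first, sum_product,
    sum_product, sum_singleton]
  simp only [sum_singleton]
  rw [← mul_sum, ← sum_mul]
  ring

end OffDiag

section FiniteSum

variable {ι : Type*} (s : Finset ι) (ξ : ι → ℝ)

lemma prod_cosh_pos : 0 < ∏ i ∈ s, cosh (ξ i) :=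
  prod_pos fun i _ ↦ cosh_pos (ξ i)

lemma cosh_sum_le_two_pow_card_mul_prod_cosh :
    cosh (∑ i ∈ s, ξ i) ≤ 2 ^ #s * ∏ i ∈ s, cosh (ξ i) := by
  induction s using Finset.cons_induction with
  | empty => simp
  | cons a s ha ih =>
    rw [sum_cons, prod_cons, card_cons]
    calc cosh (ξ a + ∑ i ∈ s, ξ i)
        ≤ 2 * (cosh (ξ a) * cosh (∑ i ∈ s, ξ i)) := cosh_add_le_two_mul_cosh_mul_cosh _ _
      _ ≤ 2 * (cosh (ξ a) * (2 ^ #s * ∏ i ∈ s, cosh (ξ i))) := by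
        have := cosh_pos (ξ a)
        gcongr
      _ = 2 ^ (#s + 1) * (cosh (ξ a) * ∏ i ∈ s, cosh (ξ i)) := by ring

lemma abs_sinh_sum_le_two_pow_card_mul_sum_abs_mul_prod_cosh :
    |sinh (∑ i ∈ s, ξ i)| ≤ 2 ^ #s * (∑ i ∈ s, |ξ i|) * ∏ i ∈ s, cosh (ξ i) :=
  calc |sinh (∑ i ∈ s, ξ i)|
      ≤ |∑ i ∈ s, ξ i| * cosh (∑ i ∈ s, ξ i) := abs_sinh_le_abs_mul_cosh _
    _ ≤ (∑ i ∈ s, |ξ i|) * (2 ^ #s * ∏ i ∈ s, cosh (ξ i)) :=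
      mul_le_mul (abs_sum_le_sum_abs ξ s) (cosh_sum_le_two_pow_card_mul_prod_cosh s ξ)
        (cosh_pos _).le (sum_nonneg fun i _ ↦ abs_nonneg (ξ i))
    _ = 2 ^ #s * (∑ i ∈ s, |ξ i|) * ∏ i ∈ s, cosh (ξ i) := by ring

lemma abs_prod_cosh_sub_cosh_sum_le :
    |∏ i ∈ s, cosh (ξ i) - cosh (∑ i ∈ s, ξ i)| ≤
      2 ^ #s * (∑ q ∈ s.offDiag, |ξ q.1| * |ξ q.2|) * ∏ i ∈ s, cosh (ξ i) := by
  classical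
  induction s using Finset.induction_on with
  | empty => simp
  | insert a s ha ih =>
    rw [sum_insert ha, prod_insert ha, card_insert_of_notMem ha,
      sum_offDiag_mul_insert ha fun i ↦ |ξ i|]
    have sinh_sum_le := abs_sinh_sum_le_two_pow_card_mul_sum_abs_mul_prod_cosh s ξ
    have pairs_nonneg : 0 ≤ ∑ q ∈ s.offDiag, |ξ q.1| * |ξ q.2| := by positivity
    have new_pairs_nonneg : 0 ≤ |ξ a| * ∑ i ∈ s, |ξ i| := by positivity
    have cosh_a_nonneg := (cosh_pos (ξ a)).le
    have P_nonneg := (prod_cosh_pos s ξ).le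
    set P := ∏ i ∈ s, cosh (ξ i)
    set S := ∑ i ∈ s, ξ i
    set A := ∑ i ∈ s, |ξ i|
    set Q := ∑ q ∈ s.offDiag, |ξ q.1| * |ξ q.2|
    calc |cosh (ξ a) * P - cosh (ξ a + S)|
        = |cosh (ξ a) * (P - cosh S) - sinh (ξ a) * sinh S| := by rw [cosh_add]; ring_nf
      _ ≤ cosh (ξ a) * |P - cosh S| + |sinh (ξ a)| * |sinh S| := by
        simpa only [abs_mul, abs_of_nonneg cosh_a_nonneg] using
          abs_sub (cosh (ξ a) * (P - cosh S)) (sinh (ξ a) * sinh S)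
      _ ≤ cosh (ξ a) * (2 ^ #s * Q * P) + |ξ a| * cosh (ξ a) * (2 ^ #s * A * P) := by
        gcongr
        exact abs_sinh_le_abs_mul_cosh (ξ a)
      _ = 2 ^ #s * (Q + |ξ a| * A) * (cosh (ξ a) * P) := by ring
      _ ≤ 2 ^ (#s + 1) * (Q + 2 * (|ξ a| * A)) * (cosh (ξ a) * P) := by
        gcongr ?_ * ?_ * _
        · exact pow_le_pow_right₀ one_le_two (Nat.le_succ _)
        · linarith

theorem cosh_sech_prod_est_general :
    |1 - cosh (∑ i ∈ s, ξ i) * ∏ i ∈ s, (cosh (ξ i))⁻¹| ≤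
      2 ^ #s * ∑ q ∈ s.offDiag, |ξ q.1| * |ξ q.2| := by
  have P_pos := prod_cosh_pos s ξ
  rw [prod_inv_distrib, ← div_eq_mul_inv, one_sub_div P_pos.ne', abs_div, abs_of_pos P_pos,
    div_le_iff₀ P_pos]
  exact abs_prod_cosh_sub_cosh_sum_le s ξ

end FiniteSum

/-- Lemma 2.5 of the paper: for `ξ = ξ₁ + ⋯ + ξ_p`,
`|1 − cosh(|ξ|)·∏ sech(|ξ_j|)| ≤ 2^p · Σ_{j≠k} |ξ_j||ξ_k|`,
the sum ranging over all ordered pairs `(j,k)` with `j ≠ k`. -/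
theorem cosh_sech_prod_est (p : ℕ) (hp : 1 ≤ p) (ξ : Fin p → ℝ) :
    |1 - Real.cosh (|∑ j, ξ j|) * ∏ j, (Real.cosh (|ξ j|))⁻¹| ≤
      2 ^ p * ∑ j, ∑ k, if j ≠ k then |ξ j| * |ξ k| else 0 := by
  simpa only [cosh_abs, card_fin, sum_offDiag_eq_sum_sum_ite univ fun j k ↦ |ξ j| * |ξ k|]
    using cosh_sech_prod_est_general univ ξ
end

section
/- Let σ ≥ 0 and let ξ₁, ξ₂, ξ₃ be real numbers with ξ = ξ₁ + ξ₂ + ξ₃. Then |1 − cosh(σ|ξ|)·sech(σ|ξ₁|)·sech(σ|ξ₂|)·sech(σ|ξ₃|)| ≤ 16 σ² (|ξ₁||ξ₂| + |ξ₁||ξ₃| + |ξ₂||ξ₃|). -/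
/-!
Expanding `cosh (x + y + z)` by the addition formulas and dividing by `cosh x * cosh y * cosh z`
leaves `1` plus the pairwise products of hyperbolic tangents. The constant term cancels in
the symbol, and `|tanh t| ≤ |t|` bounds the rest, even with constant `1` in place of `16`.
-/

theorem abs_sinh_le_cosh_mul_abs (x : ℝ) : |Real.sinh x| ≤ Real.cosh x * |x| := by
  have deriv_le : ∀ t ∈ Metric.closedBall (0 : ℝ) |x|, ‖deriv Real.sinh t‖ ≤ Real.cosh x := by
    intro t ht
    rw [Real.deriv_sinh, Real.norm_of_nonneg (Real.cosh_pos t).le, Real.cosh_le_cosh]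
    exact mem_closedBall_zero_iff.mp ht
  simpa using (convex_closedBall (0 : ℝ) |x|).norm_image_sub_le_of_norm_deriv_le
    (fun _ _ ↦ Real.differentiableAt_sinh) deriv_le (x := 0) (y := x) (by simp) (by simp)

theorem abs_tanh_le_abs (x : ℝ) : |Real.tanh x| ≤ |x| := by
  rw [Real.tanh_eq_sinh_div_cosh, abs_div, abs_of_pos (Real.cosh_pos x),
    div_le_iff₀' (Real.cosh_pos x)]
  exact abs_sinh_le_cosh_mul_abs x

theorem abs_tanh_mul_tanh_le (x y : ℝ) : |Real.tanh x * Real.tanh y| ≤ |x| * |y| := by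
  rw [abs_mul]
  exact mul_le_mul (abs_tanh_le_abs x) (abs_tanh_le_abs y) (abs_nonneg _) (abs_nonneg _)

theorem cosh_add_add_div_cosh_mul_cosh_mul_cosh (x y z : ℝ) :
    Real.cosh (x + y + z) / (Real.cosh x * Real.cosh y * Real.cosh z) =
      1 + (Real.tanh x * Real.tanh y + Real.tanh x * Real.tanh z +
        Real.tanh y * Real.tanh z) := by
  have hx := (Real.cosh_pos x).ne'
  have hy := (Real.cosh_pos y).ne'
  have hz := (Real.cosh_pos z).ne'
  simp only [Real.tanh_eq_sinh_div_cosh, Real.cosh_add, Real.sinh_add]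
  field_simp
  ring

theorem abs_one_sub_cosh_add_add_div_le (x y z : ℝ) :
    |1 - Real.cosh (x + y + z) / (Real.cosh x * Real.cosh y * Real.cosh z)| ≤
      |x| * |y| + |x| * |z| + |y| * |z| := by
  rw [cosh_add_add_div_cosh_mul_cosh_mul_cosh, sub_add_cancel_left, abs_neg]
  exact (abs_add_three _ _ _).trans <| add_le_add_three
    (abs_tanh_mul_tanh_le x y) (abs_tanh_mul_tanh_le x z) (abs_tanh_mul_tanh_le y z)

theorem cosh_mul_abs (a x : ℝ) : Real.cosh (a * |x|) = Real.cosh (a * x) := by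
  rw [← Real.cosh_abs, abs_mul, abs_abs, ← abs_mul, Real.cosh_abs]

theorem trilinear_symbol_est_general (σ ξ₁ ξ₂ ξ₃ : ℝ) :
    |1 - Real.cosh (σ * |ξ₁ + ξ₂ + ξ₃|) * (Real.cosh (σ * |ξ₁|))⁻¹ *
        (Real.cosh (σ * |ξ₂|))⁻¹ * (Real.cosh (σ * |ξ₃|))⁻¹| ≤
      σ ^ 2 * (|ξ₁| * |ξ₂| + |ξ₁| * |ξ₃| + |ξ₂| * |ξ₃|) := by
  simp only [cosh_mul_abs, ← div_eq_mul_inv, div_div, mul_add]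
  calc
    _ ≤ |σ * ξ₁| * |σ * ξ₂| + |σ * ξ₁| * |σ * ξ₃| + |σ * ξ₂| * |σ * ξ₃| :=
      abs_one_sub_cosh_add_add_div_le _ _ _
    _ = _ := by
      simp only [abs_mul, ← sq_abs σ]
      ring

/-- Trilinear symbol bound: for `σ ≥ 0` and `ξ = ξ₁ + ξ₂ + ξ₃`,
`|1 − cosh(σ|ξ|)·sech(σ|ξ₁|)·sech(σ|ξ₂|)·sech(σ|ξ₃|)|
  ≤ 16 σ² (|ξ₁||ξ₂| + |ξ₁||ξ₃| + |ξ₂||ξ₃|)`. -/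
theorem trilinear_symbol_est (σ : ℝ) (hσ : 0 ≤ σ) (ξ₁ ξ₂ ξ₃ : ℝ) :
    |1 - Real.cosh (σ * |ξ₁ + ξ₂ + ξ₃|) * (Real.cosh (σ * |ξ₁|))⁻¹ *
        (Real.cosh (σ * |ξ₂|))⁻¹ * (Real.cosh (σ * |ξ₃|))⁻¹| ≤
      16 * σ ^ 2 * (|ξ₁| * |ξ₂| + |ξ₁| * |ξ₃| + |ξ₂| * |ξ₃|) := by
  exact (trilinear_symbol_est_general σ ξ₁ ξ₂ ξ₃).trans <| by
    gcongr; linarith [sq_nonneg σ]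
end

section
/- For every b > 1/2 there exists a constant C > 0 such that for every Schwartz function u : ℝ² → ℂ one has ‖u‖_{L^8(ℝ²)} ≤ C · ( ∫_{ℝ²} (1+|τ−ξ³|)^{2b} |û(ξ,τ)|² dξ dτ )^{1/2}. -/
open MeasureTheory

/-!
Write `σ = τ - ξ³`. By Fourier inversion `u` is a superposition over `σ` of modulated extensions
from the cubic curve `τ = ξ³`. By Minkowski's inequality, and by the Cauchy–Schwarz inequality
against the weight `(1 + |σ|)^(-2b)`, integrable as `b > 1/2`, it therefore suffices to bound the
extension operator of the curve from `L²` to `L⁸`. The square of the extension of `f` is the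
Fourier transform of the push-forward of `f ⊗ f` under `(ξ, η) ↦ (ξ + η, ξ³ + η³)`, whose Jacobian
determinant is `-3 (ξ² - η²)`. The Hausdorff–Young inequality from `L^{4/3}` to `L⁴` then leaves
the integral of `|f(ξ) f(η)|^{4/3} |ξ² - η²|^{-1/3}`. As `|ξ² - η²|` is at least the square of the
smaller of `|ξ - η|` and `|ξ + η|`, this is at most the sum of two Hardy–Littlewood–Sobolev
integrals with kernels `|ξ ∓ η|^{-2/3}`.
-/

namespace Airy

open scoped ENNReal NNReal Real FourierTransform Convolution ContDiff

section Young

variable {G : Type*} [AddGroup G] [MeasurableSpace G] [MeasurableAdd₂ G] [MeasurableNeg G]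
  {μ : Measure G} [μ.IsAddLeftInvariant] {f g : G → ℝ≥0∞} {p q r : ℝ}

lemma lintegral_comp_neg_add_eq_self [μ.IsNegInvariant] (g : G → ℝ≥0∞) (x : G) :
    ∫⁻ y, g (-y + x) ∂μ = ∫⁻ y, g y ∂μ := by
  rw [← lintegral_neg_eq_self g, ← lintegral_add_left_eq_self (fun y ↦ g (-y)) (-x)]
  simp only [neg_add_rev, neg_neg]

variable [SFinite μ]

lemma lintegral_lconvolution (hf : AEMeasurable f μ) (hg : AEMeasurable g μ) :
    ∫⁻ x, (f ⋆ₗ[μ] g) x ∂μ = (∫⁻ x, f x ∂μ) * ∫⁻ x, g x ∂μ := by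
  simp only [lconvolution_def]
  rw [lintegral_lintegral_swap (by fun_prop), ← lintegral_mul_const'' _ hf]
  refine lintegral_congr fun y ↦ ?_
  have hgy : AEMeasurable (fun x ↦ g (-y + x)) μ := hg.comp_quasiMeasurePreserving
    (measurePreserving_add_left μ (-y)).quasiMeasurePreserving
  rw [lintegral_const_mul'' _ hgy, lintegral_add_left_eq_self g]

variable [μ.IsNegInvariant]

lemma lconvolution_le_rpow_mul_rpow_mul_rpow (hf : AEMeasurable f μ) (hg : AEMeasurable g μ)
    (hp : 1 ≤ p) (hq : 1 ≤ q) (hr : 0 < r) (hpqr : p⁻¹ + q⁻¹ = 1 + r⁻¹) (x : G) :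
    (f ⋆ₗ[μ] g) x ≤ ((fun y ↦ f y ^ p) ⋆ₗ[μ] fun y ↦ g y ^ q) x ^ r⁻¹ *
      (∫⁻ y, f y ^ p ∂μ) ^ (1 - q⁻¹) * (∫⁻ y, g y ^ q ∂μ) ^ (1 - p⁻¹) := by
  have hp' : 0 ≤ 1 - p⁻¹ := sub_nonneg.2 (inv_le_one_of_one_le₀ hp)
  have hq' : 0 ≤ 1 - q⁻¹ := sub_nonneg.2 (inv_le_one_of_one_le₀ hq)
  have split_rpow {a : ℝ} (ha : 1 ≤ a) {s : ℝ} (hs : 0 ≤ s) (has : r⁻¹ + s = a⁻¹) (c : ℝ≥0∞) :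
      (c ^ a) ^ r⁻¹ * (c ^ a) ^ s = c := by
    rw [← ENNReal.rpow_add_of_nonneg _ _ (by positivity) hs, has,
      ENNReal.rpow_rpow_inv (by positivity)]
  have holder := ENNReal.lintegral_prod_norm_pow_le (μ := μ) Finset.univ
    (f := ![fun y ↦ f y ^ p * g (-y + x) ^ q, fun y ↦ f y ^ p, fun y ↦ g (-y + x) ^ q])
    (p := ![r⁻¹, 1 - q⁻¹, 1 - p⁻¹])
    (by rintro i -; fin_cases i <;> dsimp <;> fun_prop)
    (by simp only [Fin.sum_univ_three, Matrix.cons_val]; linarith)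
    (by rintro i -; fin_cases i <;> dsimp <;> positivity)
  simp only [Fin.prod_univ_three, Matrix.cons_val] at holder
  rw [lintegral_comp_neg_add_eq_self (fun y ↦ g y ^ q)] at holder
  refine (lintegral_congr fun y ↦ ?_).trans_le holder
  calc f y * g (-y + x)
      = (f y ^ p) ^ r⁻¹ * (f y ^ p) ^ (1 - q⁻¹) *
          ((g (-y + x) ^ q) ^ r⁻¹ * (g (-y + x) ^ q) ^ (1 - p⁻¹)) := by
        rw [split_rpow hp hq' (by linarith), split_rpow hq hp' (by linarith)]
    _ = _ := by rw [ENNReal.mul_rpow_of_nonneg _ _ (by positivity)]; ring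

lemma lintegral_lconvolution_rpow_le (hf : AEMeasurable f μ) (hg : AEMeasurable g μ)
    (hp : 1 ≤ p) (hq : 1 ≤ q) (hr : 0 < r) (hpqr : p⁻¹ + q⁻¹ = 1 + r⁻¹) :
    ∫⁻ x, (f ⋆ₗ[μ] g) x ^ r ∂μ ≤
      (∫⁻ x, f x ^ p ∂μ) ^ (r / p) * (∫⁻ x, g x ^ q ∂μ) ^ (r / q) := by
  have hp' : 0 ≤ 1 - p⁻¹ := sub_nonneg.2 (inv_le_one_of_one_le₀ hp)
  have hq' : 0 ≤ 1 - q⁻¹ := sub_nonneg.2 (inv_le_one_of_one_le₀ hq)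
  set A := ∫⁻ x, f x ^ p ∂μ
  set B := ∫⁻ x, g x ^ q ∂μ
  have collect_rpow (c : ℝ≥0∞) {s t : ℝ} (hs : 0 ≤ s) (hst : r⁻¹ + s = t⁻¹) :
      c * c ^ (r * s) = c ^ (r / t) := by
    nth_rw 1 [← ENNReal.rpow_one c]
    rw [← ENNReal.rpow_add_of_nonneg _ _ zero_le_one (by positivity), div_eq_mul_inv, ← hst,
      mul_add, mul_inv_cancel₀ hr.ne']
  calc ∫⁻ x, (f ⋆ₗ[μ] g) x ^ r ∂μ
      ≤ ∫⁻ x, ((fun y ↦ f y ^ p) ⋆ₗ[μ] fun y ↦ g y ^ q) x *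
          (A ^ (r * (1 - q⁻¹)) * B ^ (r * (1 - p⁻¹))) ∂μ := by
        refine lintegral_mono fun x ↦ ?_
        refine (ENNReal.rpow_le_rpow
          (lconvolution_le_rpow_mul_rpow_mul_rpow hf hg hp hq hr hpqr x) hr.le).trans_eq ?_
        simp only [ENNReal.mul_rpow_of_nonneg _ _ hr.le, ENNReal.rpow_inv_rpow hr.ne',
          ← ENNReal.rpow_mul, mul_comm r, mul_assoc, A, B]
    _ = A * A ^ (r * (1 - q⁻¹)) * (B * B ^ (r * (1 - p⁻¹))) := by
        rw [lintegral_mul_const'' _ (by fun_prop),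
          lintegral_lconvolution (by fun_prop) (by fun_prop)]
        ring
    _ = A ^ (r / p) * B ^ (r / q) := by
        rw [collect_rpow A (t := p) hq' (by linarith), collect_rpow B (t := q) hp' (by linarith)]

end Young

lemma enorm_convolution_mul_le {E : Type*} [AddCommGroup E] [MeasureSpace E] (f g : E → ℂ)
    (x : E) :
    ‖(f ⋆[ContinuousLinearMap.mul ℂ ℂ] g) x‖ₑ ≤ ((‖f ·‖ₑ) ⋆ₗ (‖g ·‖ₑ)) x := by
  refine (enorm_integral_le_lintegral_enorm _).trans_eq (lintegral_congr fun y ↦ ?_)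
  simp only [ContinuousLinearMap.mul_apply', enorm_mul, neg_add_eq_sub]

section Fourier

variable {E F : Type*} [NormedAddCommGroup E] [InnerProductSpace ℝ E] [FiniteDimensional ℝ E]
  [MeasurableSpace E] [BorelSpace E] [NormedAddCommGroup F]

lemma continuous_fourier [NormedSpace ℂ F] {f : E → F} (hf : Integrable f) : Continuous (𝓕 f) :=
  VectorFourier.fourierIntegral_continuous Real.continuous_fourierChar continuous_inner hf

variable [InnerProductSpace ℂ F] [CompleteSpace F]

lemma fourier_toLp_ae_eq {f : E → F} (hf : Integrable f) (hf₂ : MemLp f 2) :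
    (𝓕 (hf₂.toLp f) : Lp F 2) =ᵐ[volume] 𝓕 f := by
  refine ae_eq_of_integral_contDiff_smul_eq ((Lp.memLp _).locallyIntegrable (by norm_num))
    (continuous_fourier hf).locallyIntegrable fun g hg hg_supp ↦ ?_
  have hg_supp' : HasCompactSupport (Complex.ofRealCLM ∘ g) := hg_supp.comp_left rfl
  have hg' : ContDiff ℝ ∞ (Complex.ofRealCLM ∘ g) := by fun_prop
  let φ : SchwartzMap E ℂ := hg_supp'.toSchwartzMap hg'
  have hφ : ∀ x (y : F), g x • y = φ x • y := fun x y ↦ by simp [φ]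
  simp only [hφ]
  calc ∫ x, φ x • (𝓕 (hf₂.toLp f) : Lp F 2 (volume : Measure E)) x
      = ∫ x, (𝓕 φ) x • hf₂.toLp f x := by
        rw [← Lp.toTemperedDistribution_apply, ← Lp.fourier_toTemperedDistribution_eq,
          TemperedDistribution.fourier_apply, Lp.toTemperedDistribution_apply]
    _ = ∫ x, 𝓕 (φ : E → ℂ) x • f x := by
        refine integral_congr_ae ?_
        filter_upwards [hf₂.coeFn_toLp] with x hx
        rw [hx, SchwartzMap.fourier_coe]
    _ = ∫ x, φ x • 𝓕 f x := by
        have := VectorFourier.integral_fourierIntegral_smul_eq_flip (L := innerₗ E)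
          Real.continuous_fourierChar continuous_inner (φ.integrable (μ := volume)) hf
        rwa [flip_innerₗ] at this

lemma eLpNorm_fourier_le {f : E → F} (hf : Integrable f) :
    eLpNorm (𝓕 f) 2 ≤ eLpNorm f 2 := by
  by_cases hf_top : eLpNorm f 2 = ⊤
  · exact hf_top ▸ le_top
  have hf₂ : MemLp f 2 := ⟨hf.1, Ne.lt_top hf_top⟩
  have plancherel : ‖𝓕 (hf₂.toLp f)‖ₑ = ‖hf₂.toLp f‖ₑ := by
    rw [← ofReal_norm, Lp.norm_fourier_eq, ofReal_norm]
  rw [← eLpNorm_congr_ae (fourier_toLp_ae_eq hf hf₂), ← Lp.enorm_def, plancherel,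
    Lp.enorm_toLp]

/-- The exponent is even, so `(𝓕 f) ^ 2 = 𝓕 (f ⋆ f)` reduces the Hausdorff–Young inequality to
those of Plancherel and Young. -/
lemma lintegral_enorm_fourier_pow_four_le {f : E → ℂ} (hf : Integrable f) :
    ∫⁻ ξ, ‖𝓕 f ξ‖ₑ ^ 4 ≤ (∫⁻ x, ‖f x‖ₑ ^ (4 / 3 : ℝ)) ^ 3 := by
  let mul := ContinuousLinearMap.mul ℂ ℂ
  have plancherel (g : E → ℂ) (hg : Integrable g) :
      ∫⁻ ξ, ‖𝓕 g ξ‖ₑ ^ (2 : ℝ) ≤ ∫⁻ x, ‖g x‖ₑ ^ (2 : ℝ) := by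
    have h := eLpNorm_fourier_le hg
    simp only [eLpNorm_eq_lintegral_rpow_enorm_toReal two_ne_zero ENNReal.ofNat_ne_top] at h
    simpa using (ENNReal.rpow_le_rpow_iff (by norm_num)).1 h
  calc ∫⁻ ξ, ‖𝓕 f ξ‖ₑ ^ 4
      = ∫⁻ ξ, ‖𝓕 (f ⋆[mul] f) ξ‖ₑ ^ (2 : ℝ) := by
        refine lintegral_congr fun ξ ↦ ?_
        rw [Real.fourier_mul_convolution_eq hf hf, enorm_mul, ENNReal.rpow_two]
        ring
    _ ≤ ∫⁻ x, ‖(f ⋆[mul] f) x‖ₑ ^ (2 : ℝ) := plancherel _ (hf.integrable_convolution mul hf)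
    _ ≤ ∫⁻ x, ((‖f ·‖ₑ) ⋆ₗ (‖f ·‖ₑ)) x ^ (2 : ℝ) := by
        gcongr with x
        exact enorm_convolution_mul_le f f x
    _ ≤ (∫⁻ x, ‖f x‖ₑ ^ (4 / 3 : ℝ)) ^ (2 / (4 / 3) : ℝ) *
          (∫⁻ x, ‖f x‖ₑ ^ (4 / 3 : ℝ)) ^ (2 / (4 / 3) : ℝ) :=
        lintegral_lconvolution_rpow_le hf.1.enorm hf.1.enorm (by norm_num) (by norm_num)
          (by norm_num) (by norm_num)
    _ = (∫⁻ x, ‖f x‖ₑ ^ (4 / 3 : ℝ)) ^ 3 := by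
        rw [← ENNReal.rpow_add_of_nonneg _ _ (by norm_num) (by norm_num),
          ← ENNReal.rpow_natCast]
        norm_num

end Fourier

section HardyLittlewoodSobolev

open Set Metric

lemma lintegral_comp_abs (φ : ℝ → ℝ≥0∞) : ∫⁻ x, φ |x| = 2 * ∫⁻ x in Ioi 0, φ x := by
  have right : ∫⁻ x in Ioi (0 : ℝ), φ |x| = ∫⁻ x in Ioi (0 : ℝ), φ x :=
    setLIntegral_congr_fun measurableSet_Ioi fun x hx ↦ by rw [abs_of_pos hx]
  have left : ∫⁻ x in Iic (0 : ℝ), φ |x| = ∫⁻ x in Ioi (0 : ℝ), φ |x| := by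
    rw [← setLIntegral_congr Iio_ae_eq_Iic,
      ← (Measure.measurePreserving_neg (volume : Measure ℝ)).setLIntegral_comp_preimage_emb
        (Homeomorph.neg ℝ).measurableEmbedding (fun x ↦ φ |x|) (Ioi 0)]
    simp only [neg_preimage, neg_Ioi, neg_zero, abs_neg]
  rw [← lintegral_add_compl (fun x ↦ φ |x|) measurableSet_Ioi, compl_Ioi, left, right, two_mul]

lemma setLIntegral_ball_enorm_rpow {s R : ℝ} (hs : -1 < s) (hR : 0 < R) :
    ∫⁻ z in ball (0 : ℝ) R, ‖z‖ₑ ^ s = 2 * ENNReal.ofReal (R ^ (s + 1) / (s + 1)) := by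
  have integrable : IntegrableOn (fun r : ℝ ↦ r ^ s) (Ioc 0 R) :=
    (intervalIntegrable_iff_integrableOn_Ioc_of_le hR.le).1
      (intervalIntegral.intervalIntegrable_rpow' hs)
  calc ∫⁻ z in ball (0 : ℝ) R, ‖z‖ₑ ^ s
      = ∫⁻ z : ℝ, (Iio R).indicator (fun r ↦ ENNReal.ofReal r ^ s) |z| := by
        rw [← lintegral_indicator measurableSet_ball]
        refine lintegral_congr fun z ↦ ?_
        simp only [indicator, mem_ball_zero_iff, mem_Iio, Real.norm_eq_abs, ← ofReal_norm]
    _ = 2 * ∫⁻ r in Ioc 0 R, ENNReal.ofReal r ^ s := by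
        rw [lintegral_comp_abs, setLIntegral_indicator measurableSet_Iio, inter_comm,
          Ioi_inter_Iio, setLIntegral_congr Ioo_ae_eq_Ioc]
    _ = 2 * ∫⁻ r in Ioc 0 R, ENNReal.ofReal (r ^ s) := by
        congr 1
        exact setLIntegral_congr_fun measurableSet_Ioc fun r hr ↦ ENNReal.ofReal_rpow_of_pos hr.1
    _ = 2 * ENNReal.ofReal (R ^ (s + 1) / (s + 1)) := by
        rw [← ofReal_integral_eq_lintegral_ofReal integrable
          (ae_restrict_of_forall_mem measurableSet_Ioc fun r hr ↦ Real.rpow_nonneg hr.1.le s),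
          ← intervalIntegral.integral_of_le hR.le, integral_rpow (.inl hs),
          Real.zero_rpow (by linarith), sub_zero]

lemma setLIntegral_compl_ball_enorm_rpow {s R : ℝ} (hs : s < -1) (hR : 0 < R) :
    ∫⁻ z in (ball (0 : ℝ) R)ᶜ, ‖z‖ₑ ^ s = 2 * ENNReal.ofReal (-R ^ (s + 1) / (s + 1)) := by
  calc ∫⁻ z in (ball (0 : ℝ) R)ᶜ, ‖z‖ₑ ^ s
      = ∫⁻ z : ℝ, (Ici R).indicator (fun r ↦ ENNReal.ofReal r ^ s) |z| := by
        rw [← lintegral_indicator measurableSet_ball.compl]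
        refine lintegral_congr fun z ↦ ?_
        simp only [indicator, mem_compl_iff, mem_ball_zero_iff, not_lt, mem_Ici,
          Real.norm_eq_abs, ← ofReal_norm]
    _ = 2 * ∫⁻ r in Ioi R, ENNReal.ofReal r ^ s := by
        rw [lintegral_comp_abs, setLIntegral_indicator measurableSet_Ici,
          inter_eq_left.2 (Ici_subset_Ioi.2 hR), setLIntegral_congr Ioi_ae_eq_Ici.symm]
    _ = 2 * ∫⁻ r in Ioi R, ENNReal.ofReal (r ^ s) := by
        congr 1
        exact setLIntegral_congr_fun measurableSet_Ioi
          fun r hr ↦ ENNReal.ofReal_rpow_of_pos (hR.trans hr)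
    _ = 2 * ENNReal.ofReal (-R ^ (s + 1) / (s + 1)) := by
        rw [← ofReal_integral_eq_lintegral_ofReal (integrableOn_Ioi_rpow_of_lt hs hR)
          (ae_restrict_of_forall_mem measurableSet_Ioi
            fun r hr ↦ Real.rpow_nonneg (hR.trans hr).le s), integral_Ioi_rpow_of_lt hs hR]

variable {s p : ℝ} {f g : ℝ → ℝ≥0∞}

lemma setLIntegral_compl_ball_mul_enorm_rpow_le (hp : p.HolderConjugate (2 / s))
    (hf : AEMeasurable f) (hf_le : ∫⁻ y, f y ^ p ≤ 1) {R : ℝ} (hR : 0 < R) :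
    ∫⁻ y in (ball (0 : ℝ) R)ᶜ, f y * ‖y‖ₑ ^ (-s) ≤ (2 * ENNReal.ofReal R⁻¹) ^ (s / 2) := by
  have hs : 0 < s := (div_pos_iff_of_pos_left two_pos).1 hp.symm.pos
  calc ∫⁻ y in (ball (0 : ℝ) R)ᶜ, f y * ‖y‖ₑ ^ (-s)
      ≤ (∫⁻ y in (ball (0 : ℝ) R)ᶜ, f y ^ p) ^ (1 / p) *
          (∫⁻ y in (ball (0 : ℝ) R)ᶜ, (‖y‖ₑ ^ (-s)) ^ (2 / s)) ^ (1 / (2 / s)) :=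
        ENNReal.lintegral_mul_le_Lp_mul_Lq _ hp hf.restrict (by fun_prop)
    _ ≤ 1 ^ (1 / p) * (∫⁻ y in (ball (0 : ℝ) R)ᶜ, ‖y‖ₑ ^ (-2 : ℝ)) ^ (s / 2) := by
        have hs2 : -s * (2 / s) = -2 := by field_simp
        have := hp.pos
        simp only [← ENNReal.rpow_mul, hs2, one_div_div]
        gcongr
        exact (setLIntegral_le_lintegral _ _).trans hf_le
    _ = (2 * ENNReal.ofReal R⁻¹) ^ (s / 2) := by
        rw [setLIntegral_compl_ball_enorm_rpow (by norm_num) hR, ENNReal.one_rpow, one_mul]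
        norm_num [Real.rpow_neg_one]

lemma lintegral_min_mul_enorm_rpow_le_add (hs : s < 1) (hp : p.HolderConjugate (2 / s))
    (hf : AEMeasurable f) (hf_le : ∫⁻ y, f y ^ p ≤ 1) {c : ℝ≥0∞} (hc : c ≠ ⊤) {R : ℝ}
    (hR : 0 < R) :
    ∫⁻ y, min c (f y) * ‖y‖ₑ ^ (-s) ≤
      c * (2 * ENNReal.ofReal (R ^ (1 - s) / (1 - s))) + (2 * ENNReal.ofReal R⁻¹) ^ (s / 2) := by
  rw [← lintegral_add_compl _ (measurableSet_ball (x := (0 : ℝ)) (ε := R))]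
  gcongr
  · calc _ ≤ ∫⁻ y in ball (0 : ℝ) R, c * ‖y‖ₑ ^ (-s) := by
          gcongr
          exact min_le_left _ _
      _ = c * (2 * ENNReal.ofReal (R ^ (1 - s) / (1 - s))) := by
          rw [lintegral_const_mul' _ _ hc, setLIntegral_ball_enorm_rpow (by linarith) hR,
            neg_add_eq_sub]
  · calc _ ≤ ∫⁻ y in (ball (0 : ℝ) R)ᶜ, f y * ‖y‖ₑ ^ (-s) := by
          gcongr
          exact min_le_right _ _
      _ ≤ _ := setLIntegral_compl_ball_mul_enorm_rpow_le hp hf hf_le hR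

lemma lintegral_min_mul_enorm_rpow_le (hs : s < 1) (hp : p.HolderConjugate (2 / s))
    (hf : AEMeasurable f) (hf_le : ∫⁻ y, f y ^ p ≤ 1) {c : ℝ≥0∞} (hc : c ≠ ⊤) :
    ∫⁻ y, min c (f y) * ‖y‖ₑ ^ (-s) ≤
      (2 * ENNReal.ofReal (1 - s)⁻¹ + 2 ^ (s / 2)) * c ^ (p - 1) := by
  rcases eq_or_ne c 0 with rfl | hc₀
  · simp
  obtain ⟨a, ha, rfl⟩ : ∃ a : ℝ, 0 < a ∧ ENNReal.ofReal a = c :=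
    ⟨c.toReal, ENNReal.toReal_pos hc₀ hc, ENNReal.ofReal_toReal hc⟩
  have hs₀ : 0 < s := (div_pos_iff_of_pos_left two_pos).1 hp.symm.pos
  have : 0 < 1 - s := sub_pos.2 hs
  have hps : p * (1 - s / 2) = 1 := by
    rw [← inv_div, hp.symm.one_sub_inv, mul_inv_cancel₀ hp.ne_zero]
  have near_rpow : a * (a ^ (-p)) ^ (1 - s) = a ^ (p - 1) := by
    nth_rw 1 [← Real.rpow_one a]
    rw [← Real.rpow_mul ha.le, ← Real.rpow_add ha]
    congr 1
    linarith
  have far_rpow : ((a ^ (-p))⁻¹) ^ (s / 2) = a ^ (p - 1) := by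
    rw [Real.rpow_neg ha.le, inv_inv, ← Real.rpow_mul ha.le]
    congr 1
    linarith
  -- At the radius `a ^ (-p)` the two contributions are the same power of `a`.
  refine (lintegral_min_mul_enorm_rpow_le_add hs hp hf hf_le hc
    (R := a ^ (-p)) (by positivity)).trans_eq ?_
  rw [ENNReal.mul_rpow_of_nonneg _ _ (by positivity), ENNReal.ofReal_rpow_of_pos (by positivity),
    ENNReal.ofReal_rpow_of_pos ha, far_rpow, ← near_rpow, div_eq_mul_inv, add_mul,
    ENNReal.ofReal_mul ha.le, ENNReal.ofReal_mul (by positivity)]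
  ring

lemma lintegral_lintegral_mul_min_mul_enorm_sub_rpow_le (hs : s < 1)
    (hp : p.HolderConjugate (2 / s)) (hf : AEMeasurable f) (hf_le : ∫⁻ y, f y ^ p ≤ 1)
    (hg : AEMeasurable g) (hg_le : ∫⁻ x, g x ^ p ≤ 1) :
    ∫⁻ x, ∫⁻ y, g x * (min (g x) (f y) * ‖x - y‖ₑ ^ (-s)) ≤
      2 * ENNReal.ofReal (1 - s)⁻¹ + 2 ^ (s / 2) := by
  set C := 2 * ENNReal.ofReal (1 - s)⁻¹ + 2 ^ (s / 2)
  have hg_lt_top : ∀ᵐ x, g x ^ p < ⊤ :=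
    ae_lt_top' (hg.pow_const p) (hg_le.trans_lt ENNReal.one_lt_top).ne
  calc ∫⁻ x, ∫⁻ y, g x * (min (g x) (f y) * ‖x - y‖ₑ ^ (-s))
      ≤ ∫⁻ x, C * g x ^ p := by
        refine lintegral_mono_ae ?_
        filter_upwards [hg_lt_top] with x hx
        have hgx : g x ≠ ⊤ := ((ENNReal.rpow_lt_top_iff_of_pos hp.pos).1 hx).ne
        have inner : ∫⁻ y, min (g x) (f y) * ‖x - y‖ₑ ^ (-s) ≤ C * g x ^ (p - 1) := by
          rw [← lintegral_sub_left_eq_self _ x]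
          simp only [sub_sub_cancel]
          exact lintegral_min_mul_enorm_rpow_le hs hp
            (hf.comp_quasiMeasurePreserving (quasiMeasurePreserving_sub_left volume x))
            ((lintegral_sub_left_eq_self (fun y ↦ f y ^ p) x).trans_le hf_le) hgx
        calc _ ≤ g x * (C * g x ^ (p - 1)) := by
              rw [lintegral_const_mul' _ _ hgx]
              gcongr
          _ = C * (g x ^ (1 : ℝ) * g x ^ (p - 1)) := by rw [ENNReal.rpow_one]; ring
          _ = C * g x ^ p := by
              rw [← ENNReal.rpow_add_of_nonneg _ _ zero_le_one hp.sub_one_pos.le,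
                add_sub_cancel]
    _ ≤ C := by
        rw [lintegral_const_mul'' _ (hg.pow_const p)]
        exact mul_le_of_le_one_right' hg_le

lemma lintegral_lintegral_mul_mul_enorm_sub_rpow_le_of_le_one (hs : s < 1)
    (hp : p.HolderConjugate (2 / s)) (hf : AEMeasurable f) (hf_le : ∫⁻ y, f y ^ p ≤ 1)
    (hg : AEMeasurable g) (hg_le : ∫⁻ x, g x ^ p ≤ 1) :
    ∫⁻ x, ∫⁻ y, g x * f y * ‖x - y‖ₑ ^ (-s) ≤
      2 * (2 * ENNReal.ofReal (1 - s)⁻¹ + 2 ^ (s / 2)) := by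
  have mul_le_add_min (a c k : ℝ≥0∞) : c * a * k ≤ c * (min c a * k) + a * (min a c * k) := by
    rcases le_total a c with h | h
    · rw [min_eq_right h, mul_assoc]
      exact le_self_add
    · rw [min_eq_right h, mul_comm c a, mul_assoc]
      exact le_add_self
  calc ∫⁻ x, ∫⁻ y, g x * f y * ‖x - y‖ₑ ^ (-s)
      ≤ ∫⁻ x, ∫⁻ y, (g x * (min (g x) (f y) * ‖x - y‖ₑ ^ (-s)) +
          f y * (min (f y) (g x) * ‖y - x‖ₑ ^ (-s))) := by
        gcongr with x y
        rw [enorm_sub_rev y x]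
        exact mul_le_add_min _ _ _
    _ = (∫⁻ x, ∫⁻ y, g x * (min (g x) (f y) * ‖x - y‖ₑ ^ (-s))) +
          ∫⁻ x, ∫⁻ y, f y * (min (f y) (g x) * ‖y - x‖ₑ ^ (-s)) := by
        rw [lintegral_lintegral (by fun_prop), lintegral_lintegral (by fun_prop),
          lintegral_lintegral (by fun_prop), lintegral_add_left' (by fun_prop)]
    _ = (∫⁻ x, ∫⁻ y, g x * (min (g x) (f y) * ‖x - y‖ₑ ^ (-s))) +
          ∫⁻ y, ∫⁻ x, f y * (min (f y) (g x) * ‖y - x‖ₑ ^ (-s)) := by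
        rw [lintegral_lintegral_swap (f := fun x y ↦ f y * (min (f y) (g x) * ‖y - x‖ₑ ^ (-s)))
          (by fun_prop)]
    _ ≤ _ := by
        rw [two_mul]
        exact add_le_add
          (lintegral_lintegral_mul_min_mul_enorm_sub_rpow_le hs hp hf hf_le hg hg_le)
          (lintegral_lintegral_mul_min_mul_enorm_sub_rpow_le hs hp hg hg_le hf hf_le)

lemma exists_ae_eq_mul_lintegral_rpow {α : Type*} [MeasurableSpace α] {μ : Measure α}
    {f : α → ℝ≥0∞} {p : ℝ} (hp : 0 < p) (hf : AEMeasurable f μ) (hf_top : ∫⁻ x, f x ^ p ∂μ ≠ ⊤) :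
    ∃ f' : α → ℝ≥0∞, AEMeasurable f' μ ∧ ∫⁻ x, f' x ^ p ∂μ ≤ 1 ∧
      ∀ᵐ x ∂μ, f x = f' x * (∫⁻ x, f x ^ p ∂μ) ^ (1 / p) := by
  by_cases hf₀ : ∫⁻ x, f x ^ p ∂μ = 0
  · refine ⟨0, by fun_prop, by simp [hp], ?_⟩
    filter_upwards [(lintegral_eq_zero_iff' (hf.pow_const p)).1 hf₀] with x hx
    simpa [hp, hp.not_gt] using hx
  · exact ⟨ENNReal.funMulInvSnorm f p μ, hf.mul_const _,
      (ENNReal.lintegral_rpow_funMulInvSnorm_eq_one hp hf₀ hf_top).le,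
      .of_forall fun _ ↦ ENNReal.fun_eq_funMulInvSnorm_mul_eLpNorm f hf₀ hf_top⟩

lemma exists_lintegral_lintegral_mul_mul_enorm_sub_rpow_le (hs : s < 1)
    (hp : p.HolderConjugate (2 / s)) :
    ∃ C : ℝ≥0, ∀ {f g : ℝ → ℝ≥0∞}, AEMeasurable f → AEMeasurable g →
      ∫⁻ x, f x ^ p ≠ ⊤ → ∫⁻ x, g x ^ p ≠ ⊤ →
      ∫⁻ x, ∫⁻ y, f x * g y * ‖x - y‖ₑ ^ (-s) ≤
        C * ((∫⁻ x, f x ^ p) ^ (1 / p) * (∫⁻ x, g x ^ p) ^ (1 / p)) := by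
  have : 0 ≤ s := ((div_pos_iff_of_pos_left two_pos).1 hp.symm.pos).le
  obtain ⟨C, hC⟩ : ∃ C : ℝ≥0, C = 2 * (2 * ENNReal.ofReal (1 - s)⁻¹ + 2 ^ (s / 2)) :=
    ⟨_, ENNReal.coe_toNNReal (by finiteness)⟩
  refine ⟨C, fun {f g} hf hg hf_top hg_top ↦ ?_⟩
  obtain ⟨f', hf', hf'_le, hff'⟩ := exists_ae_eq_mul_lintegral_rpow hp.pos hf hf_top
  obtain ⟨g', hg', hg'_le, hgg'⟩ := exists_ae_eq_mul_lintegral_rpow hp.pos hg hg_top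
  set A := (∫⁻ x, f x ^ p) ^ (1 / p)
  set B := (∫⁻ x, g x ^ p) ^ (1 / p)
  calc ∫⁻ x, ∫⁻ y, f x * g y * ‖x - y‖ₑ ^ (-s)
      = ∫⁻ x, ∫⁻ y, f' x * g' y * ‖x - y‖ₑ ^ (-s) * (A * B) := by
        refine lintegral_congr_ae ?_
        filter_upwards [hff'] with x hx
        refine lintegral_congr_ae ?_
        filter_upwards [hgg'] with y hy
        rw [hx, hy]
        ring
    _ = (∫⁻ x, ∫⁻ y, f' x * g' y * ‖x - y‖ₑ ^ (-s)) * (A * B) := by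
        rw [lintegral_lintegral (by fun_prop), lintegral_mul_const'' _ (by fun_prop),
          lintegral_lintegral (by fun_prop)]
    _ ≤ C * (A * B) := by
        rw [hC]
        gcongr
        exact lintegral_lintegral_mul_mul_enorm_sub_rpow_le_of_le_one hs hp hg' hg'_le hf' hf'_le

lemma exists_lintegral_lintegral_mul_mul_enorm_add_rpow_le (hs : s < 1)
    (hp : p.HolderConjugate (2 / s)) :
    ∃ C : ℝ≥0, ∀ {f g : ℝ → ℝ≥0∞}, AEMeasurable f → AEMeasurable g →
      ∫⁻ x, f x ^ p ≠ ⊤ → ∫⁻ x, g x ^ p ≠ ⊤ →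
      ∫⁻ x, ∫⁻ y, f x * g y * ‖x + y‖ₑ ^ (-s) ≤
        C * ((∫⁻ x, f x ^ p) ^ (1 / p) * (∫⁻ x, g x ^ p) ^ (1 / p)) := by
  obtain ⟨C, hC⟩ := exists_lintegral_lintegral_mul_mul_enorm_sub_rpow_le hs hp
  refine ⟨C, fun {f g} hf hg hf_top hg_top ↦ ?_⟩
  have hg_neg : AEMeasurable fun y ↦ g (-y) :=
    hg.comp_quasiMeasurePreserving (Measure.measurePreserving_neg volume).quasiMeasurePreserving
  have lintegral_neg : ∫⁻ y, g (-y) ^ p = ∫⁻ y, g y ^ p :=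
    lintegral_neg_eq_self fun y ↦ g y ^ p
  calc ∫⁻ x, ∫⁻ y, f x * g y * ‖x + y‖ₑ ^ (-s)
      = ∫⁻ x, ∫⁻ y, f x * g (-y) * ‖x - y‖ₑ ^ (-s) := by
        refine lintegral_congr fun x ↦ ?_
        rw [← lintegral_neg_eq_self]
        simp only [← sub_eq_add_neg]
    _ ≤ _ := lintegral_neg ▸ hC hf hg_neg hf_top (lintegral_neg ▸ hg_top)

end HardyLittlewoodSobolev

section ChangeOfVariables

open Set Function

variable {E : Type*} [NormedAddCommGroup E] [NormedSpace ℝ E] [FiniteDimensional ℝ E]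
  [MeasurableSpace E] [BorelSpace E] {μ : Measure E} [μ.IsAddHaarMeasure]
  {Φ : E → E} {Φ' : E → E →L[ℝ] E} {S : Set E}

lemma exists_pushforward_density (hS : MeasurableSet S)
    (hΦ' : ∀ x ∈ S, HasFDerivWithinAt Φ (Φ' x) S x) (hΦ : InjOn Φ S)
    (hdet : ∀ x ∈ S, (Φ' x).det ≠ 0) {F : E → ℂ} (hF : IntegrableOn F S μ) :
    ∃ G : E → ℂ, Integrable G μ ∧
      (∀ ψ : E → ℂ, ∫ x in S, ψ (Φ x) * F x ∂μ = ∫ q, ψ q * G q ∂μ) ∧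
      ∀ r : ℝ, 0 < r →
        ∫⁻ q, ‖G q‖ₑ ^ r ∂μ = ∫⁻ x in S, ‖F x‖ₑ ^ r * ‖(Φ' x).det‖ₑ ^ (1 - r) ∂μ := by
  let density (q : E) : ℂ := |(Φ' (invFunOn Φ S q)).det|⁻¹ • F (invFunOn Φ S q)
  have density_apply {x : E} (hx : x ∈ S) : density (Φ x) = |(Φ' x).det|⁻¹ • F x := by
    simp only [density, hΦ.leftInvOn_invFunOn hx]
  have himage : MeasurableSet (Φ '' S) := measurable_image_of_fderivWithin hS hΦ' hΦ
  have smul_density {x : E} (hx : x ∈ S) : |(Φ' x).det| • density (Φ x) = F x := by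
    rw [density_apply hx, smul_inv_smul₀ (abs_ne_zero.2 (hdet x hx))]
  refine ⟨(Φ '' S).indicator density, (integrable_indicator_iff himage).2 ?_, fun ψ ↦ ?_,
    fun r hr ↦ ?_⟩
  · rw [integrableOn_image_iff_integrableOn_abs_det_fderiv_smul μ hS hΦ' hΦ]
    exact hF.congr_fun (fun x hx ↦ (smul_density hx).symm) hS
  · simp only [← indicator_mul_right]
    rw [integral_indicator himage, integral_image_eq_integral_abs_det_fderiv_smul μ hS hΦ' hΦ]
    exact setIntegral_congr_fun hS fun x hx ↦ by
      simp only [← mul_smul_comm, smul_density hx]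
  · have indicator_rpow (q : E) : ‖(Φ '' S).indicator density q‖ₑ ^ r =
        (Φ '' S).indicator (fun q ↦ ‖density q‖ₑ ^ r) q := by
      by_cases hq : q ∈ Φ '' S <;> simp [hq, hr]
    simp only [indicator_rpow]
    rw [lintegral_indicator himage, lintegral_image_eq_lintegral_abs_det_fderiv_mul μ hS hΦ' hΦ]
    refine setLIntegral_congr_fun hS fun x hx ↦ ?_
    have hx₀ : ‖(Φ' x).det‖ₑ ≠ 0 := enorm_ne_zero.2 (hdet x hx)
    rw [density_apply hx, enorm_smul, ← Real.enorm_eq_ofReal_abs,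
      enorm_inv (abs_ne_zero.2 (hdet x hx)), Real.enorm_abs,
      ENNReal.mul_rpow_of_nonneg _ _ hr.le, ENNReal.inv_rpow, ← ENNReal.rpow_neg,
      ENNReal.rpow_sub _ _ hx₀ enorm_ne_top, ENNReal.rpow_one, ENNReal.rpow_neg, div_eq_mul_inv]
    ring

end ChangeOfVariables

section PlaneFourier

open Real (pi_ne_zero two_pi_pos)

/-- The character `p ↦ exp (i ⟨z, p⟩)` of the plane. -/
noncomputable def planeWave (z p : ℝ × ℝ) : ℂ :=
  Complex.exp ((z.1 * p.1 + z.2 * p.2 : ℝ) * Complex.I)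

/-- The inverse Fourier transform on the plane, unnormalised and without the factor `2π` that `𝓕⁻`
has in the exponent; the Fourier transform of `strichartz_L8` is its reflection. -/
noncomputable def planeFourier (f : ℝ × ℝ → ℂ) (z : ℝ × ℝ) : ℂ :=
  ∫ p, planeWave z p * f p

lemma norm_planeWave (z p : ℝ × ℝ) : ‖planeWave z p‖ = 1 :=
  Complex.norm_exp_ofReal_mul_I _

lemma planeFourier_neg_apply (f : ℝ × ℝ → ℂ) (p : ℝ × ℝ) :
    planeFourier f (-p) = ∫ q, Complex.exp (-Complex.I * (q.1 * p.1 + q.2 * p.2)) * f q := by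
  refine integral_congr_ae (.of_forall fun q ↦ ?_)
  simp only [planeWave, Prod.fst_neg, Prod.snd_neg]
  congr 2
  push_cast
  ring

lemma planeWave_smul_comm (c : ℝ) (z p : ℝ × ℝ) : planeWave (c • z) p = planeWave z (c • p) := by
  simp only [planeWave, Prod.smul_fst, Prod.smul_snd, smul_eq_mul]
  congr 3
  ring

lemma fourier_eq_planeFourier (f : WithLp 2 (ℝ × ℝ) → ℂ) (w : WithLp 2 (ℝ × ℝ)) :
    𝓕 f w = planeFourier (fun p ↦ f (.toLp 2 p)) (-(2 * π) • w.ofLp) := by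
  rw [planeFourier, ← (WithLp.volume_preserving_ofLp ℝ ℝ).integral_comp
    (WithLp.prodContinuousLinearEquiv 2 ℝ ℝ ℝ).toHomeomorph.measurableEmbedding,
    Real.fourier_eq']
  refine integral_congr_ae (.of_forall fun p ↦ ?_)
  simp only [planeWave, WithLp.prod_inner_apply, RCLike.inner_apply, conj_trivial,
    Prod.smul_fst, Prod.smul_snd, smul_eq_mul]
  congr 4
  ring

lemma fourierInv_eq_planeFourier (f : WithLp 2 (ℝ × ℝ) → ℂ) (w : WithLp 2 (ℝ × ℝ)) :
    𝓕⁻ f w = planeFourier (fun p ↦ f (.toLp 2 p)) ((2 * π) • w.ofLp) := by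
  rw [Real.fourierInv_eq_fourier_neg, fourier_eq_planeFourier, WithLp.ofLp_neg, neg_smul_neg]

lemma lintegral_comp_smul_of_ne_zero {E : Type*} [NormedAddCommGroup E] [NormedSpace ℝ E]
    [MeasurableSpace E] [BorelSpace E] [FiniteDimensional ℝ E] (μ : Measure E)
    [μ.IsAddHaarMeasure] (f : E → ℝ≥0∞) {c : ℝ} (hc : c ≠ 0) :
    ∫⁻ x, f (c • x) ∂μ = ENNReal.ofReal |(c ^ Module.finrank ℝ E)⁻¹| * ∫⁻ x, f x ∂μ := by
  rw [← smul_eq_mul, ← lintegral_smul_measure, ← Measure.map_addHaar_smul μ hc]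
  exact (lintegral_map_equiv f (Homeomorph.smulOfNeZero c hc).toMeasurableEquiv).symm

lemma lintegral_enorm_planeFourier_pow_four_le {f : ℝ × ℝ → ℂ} (hf : Integrable f) :
    ∫⁻ z, ‖planeFourier f z‖ₑ ^ 4 ≤
      ENNReal.ofReal ((2 * π) ^ 2) * (∫⁻ p, ‖f p‖ₑ ^ (4 / 3 : ℝ)) ^ 3 := by
  have hofLp := WithLp.volume_preserving_ofLp ℝ ℝ
  have hemb := (WithLp.prodContinuousLinearEquiv 2 ℝ ℝ ℝ).toHomeomorph.measurableEmbedding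
  calc ∫⁻ z, ‖planeFourier f z‖ₑ ^ 4
      = ENNReal.ofReal ((2 * π) ^ 2) * ∫⁻ z, ‖planeFourier f (-(2 * π) • z)‖ₑ ^ 4 := by
        rw [lintegral_comp_smul_of_ne_zero volume (fun z ↦ ‖planeFourier f z‖ₑ ^ 4)
          (neg_ne_zero.2 two_pi_pos.ne'), ← mul_assoc, ← ENNReal.ofReal_mul (by positivity),
          Module.finrank_prod, Module.finrank_self, one_add_one_eq_two, neg_sq,
          abs_of_nonneg (by positivity), mul_inv_cancel₀ (by positivity), ENNReal.ofReal_one,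
          one_mul]
    _ = ENNReal.ofReal ((2 * π) ^ 2) *
          ∫⁻ w, ‖𝓕 (fun p : WithLp 2 (ℝ × ℝ) ↦ f p.ofLp) w‖ₑ ^ 4 := by
        simp only [fourier_eq_planeFourier]
        rw [← hofLp.lintegral_comp_emb hemb]
    _ ≤ ENNReal.ofReal ((2 * π) ^ 2) *
          (∫⁻ p : WithLp 2 (ℝ × ℝ), ‖f p.ofLp‖ₑ ^ (4 / 3 : ℝ)) ^ 3 := by
        gcongr
        exact lintegral_enorm_fourier_pow_four_le ((hofLp.integrable_comp_emb hemb).2 hf)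
    _ = ENNReal.ofReal ((2 * π) ^ 2) * (∫⁻ p, ‖f p‖ₑ ^ (4 / 3 : ℝ)) ^ 3 := by
        rw [hofLp.lintegral_comp_emb hemb fun p ↦ ‖f p‖ₑ ^ (4 / 3 : ℝ)]

lemma exists_schwartzMap_eq_planeFourier_neg (u : SchwartzMap (ℝ × ℝ) ℂ) :
    ∃ v : SchwartzMap (ℝ × ℝ) ℂ, ∀ p, v p = planeFourier u (-p) := by
  let e := WithLp.prodContinuousLinearEquiv 2 ℝ ℝ ℝ
  let dilation : (ℝ × ℝ) ≃L[ℝ] (ℝ × ℝ) :=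
    .smulLeft (Units.mk0 (2 * π)⁻¹ (inv_ne_zero two_pi_pos.ne'))
  refine ⟨.compCLMOfContinuousLinearEquiv ℂ (dilation.trans e.symm)
    (𝓕 (SchwartzMap.compCLMOfContinuousLinearEquiv ℂ e u)), fun p ↦ ?_⟩
  have hp : -(2 * π) • (e.symm (dilation p)).ofLp = -p := by
    rw [neg_smul]
    exact congrArg Neg.neg (smul_inv_smul₀ two_pi_pos.ne' p)
  rw [SchwartzMap.compCLMOfContinuousLinearEquiv_apply, Function.comp_apply,
    SchwartzMap.fourier_coe, fourier_eq_planeFourier, ← hp]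
  rfl

lemma planeFourier_planeFourier_neg (u : SchwartzMap (ℝ × ℝ) ℂ) (z : ℝ × ℝ) :
    planeFourier (fun p ↦ planeFourier u (-p)) z = (2 * π) ^ 2 * u z := by
  let v : SchwartzMap (WithLp 2 (ℝ × ℝ)) ℂ :=
    .compCLMOfContinuousLinearEquiv ℂ (WithLp.prodContinuousLinearEquiv 2 ℝ ℝ ℝ) u
  have inversion : u z = 𝓕⁻ (𝓕 (v : WithLp 2 (ℝ × ℝ) → ℂ)) (.toLp 2 z) := by
    rw [v.continuous.fourierInv_fourier_eq v.integrable
      (SchwartzMap.fourier_coe v ▸ (𝓕 v).integrable)]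
    rfl
  calc planeFourier (fun p ↦ planeFourier u (-p)) z
      = (2 * π) ^ 2 * ∫ p, planeWave z ((2 * π) • p) * planeFourier u (-((2 * π) • p)) := by
        rw [Measure.integral_comp_smul volume
          (fun p ↦ planeWave z p * planeFourier u (-p))]
        rw [Module.finrank_prod, Module.finrank_self, one_add_one_eq_two,
          abs_of_nonneg (by positivity), Complex.real_smul]
        push_cast
        rw [mul_inv_cancel_left₀ (by simp [pi_ne_zero])]
        rfl
    _ = (2 * π) ^ 2 * u z := by
        simp only [inversion, fourierInv_eq_planeFourier, fourier_eq_planeFourier, planeFourier,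
          planeWave_smul_comm, neg_smul]
        rfl

end PlaneFourier

section CubicCurve

/-- The sum `(ξ, ξ³) + (η, η³)` of two points of the cubic curve, as a function of `(ξ, η)`. -/
def cubicSum (x : ℝ × ℝ) : ℝ × ℝ :=
  (x.1 + x.2, x.1 ^ 3 + x.2 ^ 3)

/-- The derivative of `cubicSum`. -/
noncomputable def cubicSumDeriv (x : ℝ × ℝ) : ℝ × ℝ →L[ℝ] ℝ × ℝ :=
  (Matrix.toLin (.finTwoProd ℝ) (.finTwoProd ℝ)
    !![1, 1; 3 * x.1 ^ 2, 3 * x.2 ^ 2]).toContinuousLinearMap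

/-- One of the two halves of the plane, exchanged by the symmetry of `cubicSum`, on which
`cubicSum` is injective, without the line `ξ + η = 0` which it contracts to a point. -/
def cubicSumDomain : Set (ℝ × ℝ) :=
  {x | x.2 < x.1 ∧ x.1 + x.2 ≠ 0}

lemma hasFDerivAt_cubicSum (x : ℝ × ℝ) : HasFDerivAt cubicSum (cubicSumDeriv x) x := by
  rw [cubicSumDeriv, Matrix.toLin_finTwoProd_toContinuousLinearMap]
  convert! HasFDerivAt.prodMk (𝕜 := ℝ) ((hasFDerivAt_fst (p := x)).add hasFDerivAt_snd)
    (((hasDerivAt_pow 3 x.1).comp_hasFDerivAt x hasFDerivAt_fst).add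
      ((hasDerivAt_pow 3 x.2).comp_hasFDerivAt x hasFDerivAt_snd)) using 2
  all_goals simp

lemma det_cubicSumDeriv (x : ℝ × ℝ) :
    (cubicSumDeriv x).det = -3 * ((x.1 - x.2) * (x.1 + x.2)) := by
  rw [cubicSumDeriv, LinearMap.det_toContinuousLinearMap, LinearMap.det_toLin,
    Matrix.det_fin_two_of]
  ring

lemma det_cubicSumDeriv_ne_zero {x : ℝ × ℝ} (hx : x ∈ cubicSumDomain) :
    (cubicSumDeriv x).det ≠ 0 := by
  rw [det_cubicSumDeriv]
  exact mul_ne_zero (by norm_num) (mul_ne_zero (sub_ne_zero.2 hx.1.ne') hx.2)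

lemma measurableSet_cubicSumDomain : MeasurableSet cubicSumDomain :=
  (measurableSet_lt measurable_snd measurable_fst).inter
    (measurableSet_eq_fun (by fun_prop) measurable_const).compl

/-- Two numbers with given nonzero sum are determined up to order by the sum of their cubes, as
`4 (ξ³ + η³) = (ξ + η)³ + 3 (ξ + η) (ξ - η)²`. -/
lemma injOn_cubicSum : Set.InjOn cubicSum cubicSumDomain := by
  rintro ⟨x₁, x₂⟩ ⟨hx, hx₀⟩ ⟨y₁, y₂⟩ ⟨hy, -⟩ hxy
  simp only [cubicSum, Prod.mk.injEq] at hx hx₀ hy hxy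
  obtain ⟨hsum, hcube⟩ := hxy
  have hsq : (x₁ - x₂) ^ 2 = (y₁ - y₂) ^ 2 := by
    refine mul_left_cancel₀ (mul_ne_zero three_ne_zero hx₀) ?_
    obtain rfl : y₂ = x₁ + x₂ - y₁ := by linarith
    linear_combination 4 * hcube
  have hdiff : x₁ - x₂ = y₁ - y₂ := (sq_eq_sq₀ (by linarith) (by linarith)).1 hsq
  ext <;> dsimp only <;> linarith

lemma compl_cubicSumDomain_ae_eq :
    (cubicSumDomainᶜ : Set (ℝ × ℝ)) =ᵐ[volume] Prod.swap ⁻¹' cubicSumDomain := by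
  have off_lines : ∀ᵐ x : ℝ × ℝ, x.2 ≠ x.1 ∧ x.2 ≠ -x.1 := by
    refine (Measure.ae_prod_iff_ae_ae ?_).2 (.of_forall fun ξ ↦ ?_)
    · exact (measurableSet_eq_fun (by fun_prop) (by fun_prop)).compl.inter
        (measurableSet_eq_fun (by fun_prop) (by fun_prop)).compl
    · exact (Measure.ae_ne volume ξ).and (Measure.ae_ne volume (-ξ))
  refine Filter.eventuallyEq_set.2 ?_
  filter_upwards [off_lines] with x ⟨hdiag, hanti⟩
  have hsum : x.1 + x.2 ≠ 0 := fun h ↦ hanti (by linarith)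
  simp only [cubicSumDomain, Set.mem_compl_iff, Set.mem_ofPred_eq, Set.mem_preimage, Prod.fst_swap,
    Prod.snd_swap, add_comm x.2, hsum, ne_eq, not_false_eq_true, and_true, not_lt]
  exact ⟨fun h ↦ lt_of_le_of_ne h (Ne.symm hdiag), le_of_lt⟩

lemma integral_eq_two_mul_setIntegral_cubicSumDomain {h : ℝ × ℝ → ℂ} (hh : Integrable h)
    (h_swap : ∀ x, h x.swap = h x) : ∫ x, h x = 2 * ∫ x in cubicSumDomain, h x := by
  have swap_eq : ∫ x in Prod.swap ⁻¹' cubicSumDomain, h x = ∫ x in cubicSumDomain, h x := by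
    have hswap : MeasurePreserving (Prod.swap : ℝ × ℝ → ℝ × ℝ) := Measure.measurePreserving_swap
    simpa only [h_swap] using hswap.setIntegral_preimage_emb
      MeasurableEquiv.prodComm.measurableEmbedding h cubicSumDomain
  rw [← integral_add_compl measurableSet_cubicSumDomain hh,
    setIntegral_congr_set compl_cubicSumDomain_ae_eq, swap_eq, two_mul]

end CubicCurve

section Extension

/-- The Fourier extension operator of the cubic curve `τ = ξ³`: the solution of the Airy equation
`∂ₜ v + ∂ₓ³ v = 0` whose initial value has Fourier transform `2π f`. -/
noncomputable def airyExtension (f : ℝ → ℂ) (z : ℝ × ℝ) : ℂ :=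
  ∫ ξ, planeWave z (ξ, ξ ^ 3) * f ξ

lemma airyExtension_sq (f : ℝ → ℂ) (z : ℝ × ℝ) :
    airyExtension f z ^ 2 = ∫ x : ℝ × ℝ, planeWave z (cubicSum x) * (f x.1 * f x.2) := by
  rw [sq, airyExtension, ← integral_prod_mul, ← Measure.volume_eq_prod]
  refine integral_congr_ae (.of_forall fun x ↦ ?_)
  simp only [planeWave, cubicSum]
  rw [mul_mul_mul_comm, ← Complex.exp_add, ← add_mul, ← Complex.ofReal_add]
  ring_nf

lemma integrable_planeWave_mul {f : ℝ × ℝ → ℂ} (hf : Integrable f) {φ : ℝ × ℝ → ℝ × ℝ}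
    (hφ : Measurable φ) (z : ℝ × ℝ) : Integrable fun x ↦ planeWave z (φ x) * f x := by
  refine hf.bdd_mul (c := 1) ?_ (.of_forall fun x ↦ (norm_planeWave _ _).le)
  unfold planeWave
  fun_prop

lemma exists_airyExtension_sq_eq_planeFourier {f : ℝ → ℂ} (hf : Integrable f) :
    ∃ G : ℝ × ℝ → ℂ, Integrable G ∧ (∀ z, airyExtension f z ^ 2 = 2 * planeFourier G z) ∧
      ∫⁻ q, ‖G q‖ₑ ^ (4 / 3 : ℝ) = ∫⁻ x in cubicSumDomain,
        ‖f x.1 * f x.2‖ₑ ^ (4 / 3 : ℝ) * ‖(cubicSumDeriv x).det‖ₑ ^ (-(1 / 3) : ℝ) := by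
  have hff : Integrable fun x : ℝ × ℝ ↦ f x.1 * f x.2 := hf.mul_prod hf
  obtain ⟨G, hG, integral_eq, lintegral_eq⟩ := exists_pushforward_density
    measurableSet_cubicSumDomain (fun x _ ↦ (hasFDerivAt_cubicSum x).hasFDerivWithinAt)
    injOn_cubicSum (fun x ↦ det_cubicSumDeriv_ne_zero) hff.integrableOn
  refine ⟨G, hG, fun z ↦ ?_, ?_⟩
  · rw [airyExtension_sq, planeFourier, ← integral_eq]
    refine integral_eq_two_mul_setIntegral_cubicSumDomain
      (integrable_planeWave_mul hff (by unfold cubicSum; fun_prop) z) fun x ↦ ?_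
    simp only [cubicSum, Prod.fst_swap, Prod.snd_swap, add_comm x.2, mul_comm (f x.2),
      add_comm (x.2 ^ 3)]
  · rw [lintegral_eq _ (by norm_num)]
    norm_num

lemma enorm_det_cubicSumDeriv_rpow_le (x : ℝ × ℝ) :
    ‖(cubicSumDeriv x).det‖ₑ ^ (-(1 / 3) : ℝ) ≤
      ‖x.1 - x.2‖ₑ ^ (-(2 / 3) : ℝ) + ‖x.1 + x.2‖ₑ ^ (-(2 / 3) : ℝ) := by
  have rpow_le_of_sq_le {a d : ℝ≥0∞} (had : a ^ 2 ≤ d) :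
      d ^ (-(1 / 3) : ℝ) ≤ a ^ (-(2 / 3) : ℝ) :=
    calc d ^ (-(1 / 3) : ℝ) ≤ (a ^ 2) ^ (-(1 / 3) : ℝ) := by
          rw [ENNReal.rpow_neg, ENNReal.rpow_neg]
          gcongr
      _ = a ^ (-(2 / 3) : ℝ) := by
          rw [← ENNReal.rpow_natCast_mul]
          norm_num
  have le_det : ‖x.1 - x.2‖ₑ * ‖x.1 + x.2‖ₑ ≤ ‖(cubicSumDeriv x).det‖ₑ := by
    rw [det_cubicSumDeriv, enorm_mul, enorm_mul]
    refine le_mul_of_one_le_left' ?_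
    simp [enorm]
  rcases le_total ‖x.1 - x.2‖ₑ ‖x.1 + x.2‖ₑ with h | h
  · refine (rpow_le_of_sq_le (le_trans ?_ le_det)).trans le_self_add
    rw [sq]
    gcongr
  · refine (rpow_le_of_sq_le (le_trans ?_ le_det)).trans le_add_self
    rw [sq]
    gcongr

lemma exists_setLIntegral_cubicSumDomain_le :
    ∃ C : ℝ≥0, ∀ {f : ℝ → ℂ}, AEStronglyMeasurable f → ∫⁻ ξ, ‖f ξ‖ₑ ^ 2 ≠ ⊤ →
      ∫⁻ x in cubicSumDomain,
          ‖f x.1 * f x.2‖ₑ ^ (4 / 3 : ℝ) * ‖(cubicSumDeriv x).det‖ₑ ^ (-(1 / 3) : ℝ) ≤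
        C * (∫⁻ ξ, ‖f ξ‖ₑ ^ 2) ^ (4 / 3 : ℝ) := by
  have hs : (2 / 3 : ℝ) < 1 := by norm_num
  have hp : Real.HolderConjugate (3 / 2) (2 / (2 / 3)) := by
    rw [Real.holderConjugate_iff]
    norm_num
  obtain ⟨C₁, hC₁⟩ := exists_lintegral_lintegral_mul_mul_enorm_sub_rpow_le hs hp
  obtain ⟨C₂, hC₂⟩ := exists_lintegral_lintegral_mul_mul_enorm_add_rpow_le hs hp
  refine ⟨C₁ + C₂, fun {f} hf hf_top ↦ ?_⟩
  let g (ξ : ℝ) : ℝ≥0∞ := ‖f ξ‖ₑ ^ (4 / 3 : ℝ)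
  have hg : AEMeasurable g := hf.enorm.pow_const _
  have lintegral_g : ∫⁻ ξ, g ξ ^ (3 / 2 : ℝ) = ∫⁻ ξ, ‖f ξ‖ₑ ^ 2 := by
    refine lintegral_congr fun ξ ↦ ?_
    rw [← ENNReal.rpow_mul, ← ENNReal.rpow_natCast]
    norm_num
  have hg_top : ∫⁻ ξ, g ξ ^ (3 / 2 : ℝ) ≠ ⊤ := lintegral_g.trans_ne hf_top
  calc ∫⁻ x in cubicSumDomain,
          ‖f x.1 * f x.2‖ₑ ^ (4 / 3 : ℝ) * ‖(cubicSumDeriv x).det‖ₑ ^ (-(1 / 3) : ℝ)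
      ≤ ∫⁻ x : ℝ × ℝ, (g x.1 * g x.2 * ‖x.1 - x.2‖ₑ ^ (-(2 / 3) : ℝ) +
          g x.1 * g x.2 * ‖x.1 + x.2‖ₑ ^ (-(2 / 3) : ℝ)) := by
        refine (setLIntegral_le_lintegral _ _).trans (lintegral_mono fun x ↦ ?_)
        rw [enorm_mul, ENNReal.mul_rpow_of_nonneg _ _ (by norm_num), ← mul_add]
        gcongr
        exact enorm_det_cubicSumDeriv_rpow_le x
    _ = (∫⁻ ξ, ∫⁻ η, g ξ * g η * ‖ξ - η‖ₑ ^ (-(2 / 3) : ℝ)) +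
          ∫⁻ ξ, ∫⁻ η, g ξ * g η * ‖ξ + η‖ₑ ^ (-(2 / 3) : ℝ) := by
        rw [lintegral_add_left' (by fun_prop), Measure.volume_eq_prod,
          lintegral_prod _ (by fun_prop), lintegral_prod _ (by fun_prop)]
    _ ≤ _ := add_le_add (hC₁ hg hg hg_top hg_top) (hC₂ hg hg hg_top hg_top)
    _ = (C₁ + C₂ : ℝ≥0) * (∫⁻ ξ, ‖f ξ‖ₑ ^ 2) ^ (4 / 3 : ℝ) := by
        rw [lintegral_g, ← add_mul, ← ENNReal.coe_add,
          ← ENNReal.rpow_add_of_nonneg _ _ (by norm_num) (by norm_num)]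
        norm_num

lemma exists_lintegral_enorm_airyExtension_pow_eight_le :
    ∃ C : ℝ≥0, ∀ {f : ℝ → ℂ}, Integrable f → ∫⁻ ξ, ‖f ξ‖ₑ ^ 2 ≠ ⊤ →
      ∫⁻ z, ‖airyExtension f z‖ₑ ^ 8 ≤ C * (∫⁻ ξ, ‖f ξ‖ₑ ^ 2) ^ 4 := by
  obtain ⟨C, hC⟩ := exists_setLIntegral_cubicSumDomain_le
  refine ⟨2 ^ 4 * (((2 * π) ^ 2).toNNReal * C ^ 3), fun {f} hf hf_top ↦ ?_⟩
  have enorm_two : ‖(2 : ℂ)‖ₑ = 2 := by simp [enorm]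
  obtain ⟨G, hG, airyExtension_sq_eq, lintegral_G⟩ := exists_airyExtension_sq_eq_planeFourier hf
  calc ∫⁻ z, ‖airyExtension f z‖ₑ ^ 8
      = 2 ^ 4 * ∫⁻ z, ‖planeFourier G z‖ₑ ^ 4 := by
        rw [← lintegral_const_mul' _ _ (by finiteness)]
        refine lintegral_congr fun z ↦ ?_
        rw [show 8 = 2 * 4 from rfl, pow_mul, ← enorm_pow, airyExtension_sq_eq, enorm_mul,
          mul_pow, enorm_two]
    _ ≤ 2 ^ 4 * (ENNReal.ofReal ((2 * π) ^ 2) * (∫⁻ q, ‖G q‖ₑ ^ (4 / 3 : ℝ)) ^ 3) := by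
        gcongr
        exact lintegral_enorm_planeFourier_pow_four_le hG
    _ ≤ 2 ^ 4 * (ENNReal.ofReal ((2 * π) ^ 2) *
          (C * (∫⁻ ξ, ‖f ξ‖ₑ ^ 2) ^ (4 / 3 : ℝ)) ^ 3) := by
        rw [lintegral_G]
        gcongr
        exact hC hf.1 hf_top
    _ = _ := by
        rw [mul_pow (C : ℝ≥0∞), ← ENNReal.rpow_mul_natCast,
          ← ENNReal.rpow_natCast (lintegral _ _) 4]
        push_cast
        rw [show (4 / 3 * 3 : ℝ) = 4 by norm_num, ENNReal.ofReal]
        ring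

end Extension

section Minkowski

variable {α β : Type*} [MeasurableSpace α] [MeasurableSpace β] {μ : Measure α} {ν : Measure β}
  {p : ℝ}

lemma exists_seq_tendsto_lintegral_rpow [SigmaFinite μ] (hp : 0 < p) {f : α → ℝ≥0∞}
    (hf : AEMeasurable f μ) :
    ∃ g : ℕ → α → ℝ≥0∞, (∀ n, AEMeasurable (g n) μ ∧ g n ≤ f ∧ ∫⁻ x, g n x ^ p ∂μ ≠ ⊤) ∧
      Filter.Tendsto (fun n ↦ ∫⁻ x, g n x ^ p ∂μ) .atTop (nhds (∫⁻ x, f x ^ p ∂μ)) := by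
  let g (n : ℕ) : α → ℝ≥0∞ := (spanningSets μ n).indicator fun x ↦ min n (f x)
  have hg (n : ℕ) : AEMeasurable (g n) μ :=
    (aemeasurable_const.inf hf).indicator (measurableSet_spanningSets μ n)
  have hg_le (n : ℕ) : g n ≤ f :=
    Set.indicator_le fun x _ ↦ min_le_right _ _
  have hg_top (n : ℕ) : ∫⁻ x, g n x ^ p ∂μ ≠ ⊤ := by
    refine ne_top_of_le_ne_top (b := (n : ℝ≥0∞) ^ p * μ (spanningSets μ n)) ?_ ?_
    · have := (measure_spanningSets_lt_top μ n).ne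
      finiteness
    · rw [← lintegral_indicator_const (measurableSet_spanningSets μ n)]
      refine lintegral_mono fun x ↦ ?_
      by_cases hx : x ∈ spanningSets μ n
      · simp only [g, hx, Set.indicator_of_mem]
        gcongr
        exact min_le_left _ _
      · simp [g, hx, hp]
  have hg_mono (x : α) : Monotone fun n ↦ g n x ^ p := fun m n hmn ↦ by
    dsimp only [g]
    gcongr
    refine (Set.indicator_le_indicator_of_subset (monotone_spanningSets μ hmn)
      (fun _ ↦ zero_le) x).trans ?_
    gcongr
  have hg_tendsto (x : α) : Filter.Tendsto (fun n ↦ g n x ^ p) .atTop (nhds (f x ^ p)) := by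
    have h_min : Filter.Tendsto (fun n : ℕ ↦ min (n : ℝ≥0∞) (f x)) .atTop (nhds (f x)) := by
      simpa using ENNReal.tendsto_nat_nhds_top.min (tendsto_const_nhds (x := f x))
    refine (ENNReal.continuous_rpow_const.tendsto _).comp (h_min.congr' ?_)
    filter_upwards [Filter.eventually_ge_atTop (spanningSetsIndex μ x)] with n hn
    simp only [g, Set.indicator_of_mem (mem_spanningSets_of_index_le μ x hn)]
  exact ⟨g, fun n ↦ ⟨hg n, hg_le n, hg_top n⟩,
    lintegral_tendsto_of_tendsto_of_monotone (fun n ↦ (hg n).pow_const p)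
      (.of_forall hg_mono) (.of_forall hg_tendsto)⟩

variable [SFinite ν] {F : α → β → ℝ≥0∞}

lemma lintegral_rpow_le_of_le_lintegral [SFinite μ] (hp : 1 < p)
    (hF : AEMeasurable (Function.uncurry F) (μ.prod ν)) {g : α → ℝ≥0∞} (hg : AEMeasurable g μ)
    (hg_le : ∀ x, g x ≤ ∫⁻ y, F x y ∂ν) (hg_top : ∫⁻ x, g x ^ p ∂μ ≠ ⊤) :
    (∫⁻ x, g x ^ p ∂μ) ^ (1 / p) ≤ ∫⁻ y, (∫⁻ x, F x y ^ p ∂μ) ^ (1 / p) ∂ν := by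
  obtain ⟨q, hpq⟩ : ∃ q : ℝ, q.HolderConjugate p :=
    ⟨_, (Real.HolderConjugate.conjExponent hp).symm⟩
  set A := ∫⁻ x, g x ^ p ∂μ with hA
  rcases eq_or_ne A 0 with hA₀ | hA₀
  · simp [hA₀, hpq.symm.pos]
  have holder : ∀ᵐ y ∂ν, ∫⁻ x, g x ^ (p - 1) * F x y ∂μ ≤
      A ^ (1 / q) * (∫⁻ x, F x y ^ p ∂μ) ^ (1 / p) := by
    filter_upwards [hF.prod_swap.aestronglyMeasurable.prodMk_left] with y hy
    refine (ENNReal.lintegral_mul_le_Lp_mul_Lq μ hpq (hg.pow_const _) hy.aemeasurable).trans_eq ?_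
    simp only [hA, ← ENNReal.rpow_mul, hpq.symm.sub_one_mul_conj]
    rfl
  refine (ENNReal.mul_le_mul_iff_right (a := A ^ (1 / q)) (by simp [hA₀, hg_top])
    (by simp [hA₀, hg_top])).1 ?_
  calc A ^ (1 / q) * A ^ (1 / p)
      = ∫⁻ x, g x ^ (p - 1) * g x ∂μ := by
        rw [← ENNReal.rpow_add _ _ hA₀ hg_top, one_div, one_div, hpq.inv_add_inv_eq_one,
          ENNReal.rpow_one]
        refine lintegral_congr fun x ↦ ?_
        nth_rw 3 [← ENNReal.rpow_one (g x)]
        rw [← ENNReal.rpow_add_of_nonneg _ _ (by linarith) zero_le_one, sub_add_cancel]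
    _ ≤ ∫⁻ x, g x ^ (p - 1) * ∫⁻ y, F x y ∂ν ∂μ := by
        gcongr with x
        exact hg_le x
    _ = ∫⁻ x, ∫⁻ y, g x ^ (p - 1) * F x y ∂ν ∂μ := by
        refine lintegral_congr_ae ?_
        filter_upwards [hF.aestronglyMeasurable.prodMk_left] with x hx
        exact (lintegral_const_mul'' _ hx.aemeasurable).symm
    _ = ∫⁻ y, ∫⁻ x, g x ^ (p - 1) * F x y ∂μ ∂ν :=
        lintegral_lintegral_swap ((hg.comp_fst.pow_const _).mul hF)
    _ ≤ ∫⁻ y, A ^ (1 / q) * (∫⁻ x, F x y ^ p ∂μ) ^ (1 / p) ∂ν := lintegral_mono_ae holder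
    _ = A ^ (1 / q) * ∫⁻ y, (∫⁻ x, F x y ^ p ∂μ) ^ (1 / p) ∂ν :=
        lintegral_const_mul' _ _ (by simp [hA₀, hg_top])

lemma lintegral_rpow_lintegral_le [SigmaFinite μ] (hp : 1 < p)
    (hF : AEMeasurable (Function.uncurry F) (μ.prod ν)) :
    (∫⁻ x, (∫⁻ y, F x y ∂ν) ^ p ∂μ) ^ (1 / p) ≤ ∫⁻ y, (∫⁻ x, F x y ^ p ∂μ) ^ (1 / p) ∂ν := by
  obtain ⟨g, hg, hg_tendsto⟩ :=
    exists_seq_tendsto_lintegral_rpow (zero_lt_one.trans hp) hF.lintegral_prod_right'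
  refine le_of_tendsto' ((ENNReal.continuous_rpow_const.tendsto _).comp hg_tendsto) fun n ↦ ?_
  obtain ⟨hg_meas, hg_le, hg_top⟩ := hg n
  exact lintegral_rpow_le_of_le_lintegral hp hF hg_meas hg_le hg_top

end Minkowski

section Transference

lemma lintegral_rpow_half_le {α : Type*} [MeasurableSpace α] {μ : Measure α}
    {w f : α → ℝ≥0∞} (hw : AEMeasurable w μ) (hw₀ : ∀ x, w x ≠ 0) (hw_top : ∀ x, w x ≠ ⊤)
    (hf : AEMeasurable f μ) :
    ∫⁻ x, f x ^ (1 / 2 : ℝ) ∂μ ≤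
      (∫⁻ x, (w x)⁻¹ ∂μ) ^ (1 / 2 : ℝ) * (∫⁻ x, w x * f x ∂μ) ^ (1 / 2 : ℝ) := by
  have rpow_two (a : ℝ≥0∞) : (a ^ (1 / 2 : ℝ)) ^ (2 : ℝ) = a := by
    rw [← ENNReal.rpow_mul]
    norm_num
  calc ∫⁻ x, f x ^ (1 / 2 : ℝ) ∂μ
      = ∫⁻ x, (w x)⁻¹ ^ (1 / 2 : ℝ) * (w x * f x) ^ (1 / 2 : ℝ) ∂μ := by
        refine lintegral_congr fun x ↦ ?_
        rw [← ENNReal.mul_rpow_of_nonneg _ _ (by norm_num),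
          ENNReal.inv_mul_cancel_left (hw₀ x) (hw_top x)]
    _ ≤ _ := ENNReal.lintegral_mul_le_Lp_mul_Lq μ .two_two (hw.inv.pow_const _)
        ((hw.mul hf).pow_const _)
    _ = _ := by simp only [rpow_two]

/-- The change of variables `(σ, ξ) ↦ (ξ, ξ³ + σ)`, whose slices at fixed `σ` are the translates of
the cubic curve. -/
def airyShear : ℝ × ℝ ≃ᵐ ℝ × ℝ where
  toFun p := (p.2, p.2 ^ 3 + p.1)
  invFun p := (p.2 - p.1 ^ 3, p.1)
  left_inv p := by simp
  right_inv p := by simp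
  measurable_toFun := by
    simp only [Equiv.coe_fn_mk]
    fun_prop
  measurable_invFun := by
    simp only [Equiv.coe_fn_symm_mk]
    fun_prop

lemma airyShear_apply (p : ℝ × ℝ) : airyShear p = (p.2, p.2 ^ 3 + p.1) := rfl

lemma measurePreserving_airyShear : MeasurePreserving airyShear := by
  have shear : MeasurePreserving fun p : ℝ × ℝ ↦ (p.1, p.1 ^ 3 + p.2) :=
    (MeasurePreserving.id volume).skew_product (g := fun ξ σ : ℝ ↦ ξ ^ 3 + σ)
      (by unfold Function.uncurry; fun_prop)
      (.of_forall fun ξ ↦ map_add_left_eq_self volume (ξ ^ 3))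
  exact shear.comp Measure.measurePreserving_swap

/-- The norm of `X^{0,b}` in terms of the space-time Fourier transform `v`, as an extended
nonnegative real. -/
noncomputable def eBourgainNorm (b : ℝ) (v : ℝ × ℝ → ℂ) : ℝ≥0∞ :=
  (∫⁻ p, ENNReal.ofReal ((1 + |p.2 - p.1 ^ 3|) ^ (2 * b)) * ‖v p‖ₑ ^ 2) ^ (1 / 2 : ℝ)

variable {v : ℝ × ℝ → ℂ}

lemma eBourgainNorm_eq_lintegral_airyShear (b : ℝ) (hv : AEStronglyMeasurable v) :
    eBourgainNorm b v = (∫⁻ σ : ℝ, ENNReal.ofReal ((1 + ‖σ‖) ^ (2 * b)) *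
      ∫⁻ ξ, ‖v (airyShear (σ, ξ))‖ₑ ^ 2) ^ (1 / 2 : ℝ) := by
  have hv_shear : AEStronglyMeasurable fun p ↦ v (airyShear p) :=
    hv.comp_measurePreserving measurePreserving_airyShear
  have hmeas : AEMeasurable fun p : ℝ × ℝ ↦
      ENNReal.ofReal ((1 + ‖p.1‖) ^ (2 * b)) * ‖v (airyShear p)‖ₑ ^ 2 :=
    AEMeasurable.mul (by fun_prop) (hv_shear.enorm.pow_const 2)
  have modulation (p : ℝ × ℝ) : (airyShear p).2 - (airyShear p).1 ^ 3 = p.1 :=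
    add_sub_cancel_left _ _
  rw [eBourgainNorm, ← measurePreserving_airyShear.lintegral_comp_emb
    airyShear.measurableEmbedding]
  simp only [modulation, ← Real.norm_eq_abs]
  rw [Measure.volume_eq_prod, lintegral_prod _ hmeas]
  simp only [lintegral_const_mul' _ _ ENNReal.ofReal_ne_top]

lemma exists_lintegral_airyShear_le_eBourgainNorm {b : ℝ} (hb : 1 / 2 < b) :
    ∃ C : ℝ≥0, ∀ {v : ℝ × ℝ → ℂ}, AEStronglyMeasurable v →
      ∫⁻ σ, (∫⁻ ξ, ‖v (airyShear (σ, ξ))‖ₑ ^ 2) ^ (1 / 2 : ℝ) ≤ C * eBourgainNorm b v := by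
  have integrable_weight : Integrable fun σ : ℝ ↦ (1 + ‖σ‖) ^ (-(2 * b)) :=
    integrable_one_add_norm (by rw [Module.finrank_self, Nat.cast_one]; linarith)
  obtain ⟨C, hC⟩ : ∃ C : ℝ≥0,
      C = (∫⁻ σ : ℝ, (ENNReal.ofReal ((1 + ‖σ‖) ^ (2 * b)))⁻¹) ^ (1 / 2 : ℝ) := by
    refine ⟨_, ENNReal.coe_toNNReal ?_⟩
    refine ENNReal.rpow_ne_top_of_nonneg (by norm_num) ?_
    convert! integrable_weight.lintegral_lt_top.ne using 3 with σ
    rw [Real.rpow_neg (by positivity), ENNReal.ofReal_inv_of_pos (by positivity)]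
  refine ⟨C, fun {v} hv ↦ ?_⟩
  rw [hC, eBourgainNorm_eq_lintegral_airyShear b hv]
  refine lintegral_rpow_half_le (by fun_prop) (fun σ ↦ ?_) (fun _ ↦ ENNReal.ofReal_ne_top) ?_
  · exact (ENNReal.ofReal_pos.2 (by positivity)).ne'
  · exact ((hv.comp_measurePreserving measurePreserving_airyShear).enorm.pow_const
      2).lintegral_prod_right'

lemma integrable_airyShear_ae (hv : Integrable v) :
    ∀ᵐ σ, Integrable fun ξ ↦ v (airyShear (σ, ξ)) :=
  ((measurePreserving_airyShear.integrable_comp_emb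
    airyShear.measurableEmbedding).2 hv).prod_right_ae

lemma lintegral_enorm_airyShear_ne_top_ae (hv : MemLp v 2) :
    ∀ᵐ σ, ∫⁻ ξ, ‖v (airyShear (σ, ξ))‖ₑ ^ 2 ≠ ⊤ := by
  have hv_shear : MemLp (fun p ↦ v (airyShear p)) 2 :=
    hv.comp_measurePreserving measurePreserving_airyShear
  have hmeas : AEMeasurable fun p ↦ ‖v (airyShear p)‖ₑ ^ 2 := hv_shear.1.enorm.pow_const 2
  have h_lt := lintegral_rpow_enorm_lt_top_of_eLpNorm_lt_top two_ne_zero (by simp) hv_shear.2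
  simp only [ENNReal.toReal_ofNat, ENNReal.rpow_ofNat] at h_lt
  rw [Measure.volume_eq_prod, lintegral_prod _ hmeas] at h_lt
  filter_upwards [ae_lt_top' hmeas.lintegral_prod_right' h_lt.ne] with σ hσ using hσ.ne

lemma enorm_planeFourier_le_lintegral_airyExtension (hv : Integrable v) (z : ℝ × ℝ) :
    ‖planeFourier v z‖ₑ ≤ ∫⁻ σ, ‖airyExtension (fun ξ ↦ v (airyShear (σ, ξ))) z‖ₑ := by
  have planeWave_airyShear (p : ℝ × ℝ) :
      planeWave z (airyShear p) = planeWave z (0, p.1) * planeWave z (p.2, p.2 ^ 3) := by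
    simp only [planeWave, airyShear_apply]
    rw [← Complex.exp_add, ← add_mul, ← Complex.ofReal_add]
    ring_nf
  have integrable_shear : Integrable fun p ↦ planeWave z (airyShear p) * v (airyShear p) :=
    (measurePreserving_airyShear.integrable_comp_emb airyShear.measurableEmbedding).2
      (integrable_planeWave_mul hv measurable_id z)
  calc ‖planeFourier v z‖ₑ
      = ‖∫ σ, planeWave z (0, σ) * airyExtension (fun ξ ↦ v (airyShear (σ, ξ))) z‖ₑ := by
        rw [planeFourier, ← measurePreserving_airyShear.integral_comp
          airyShear.measurableEmbedding, Measure.volume_eq_prod, integral_prod _ integrable_shear]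
        simp only [planeWave_airyShear, mul_assoc, integral_const_mul, airyExtension]
    _ ≤ _ := (enorm_integral_le_lintegral_enorm _).trans_eq (lintegral_congr fun σ ↦ by
        rw [enorm_mul, ← ofReal_norm (planeWave z _), norm_planeWave, ENNReal.ofReal_one, one_mul])

lemma aestronglyMeasurable_airyExtension_airyShear (hv : AEStronglyMeasurable v) :
    AEStronglyMeasurable fun r : (ℝ × ℝ) × ℝ ↦
      airyExtension (fun ξ ↦ v (airyShear (r.2, ξ))) r.1 := by
  have hv_shear : AEStronglyMeasurable fun r : ((ℝ × ℝ) × ℝ) × ℝ ↦ v (airyShear (r.1.2, r.2)) :=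
    (hv.comp_measurePreserving measurePreserving_airyShear).comp_snd.comp_measurePreserving
      volume_preserving_prodAssoc
  have hwave : AEStronglyMeasurable fun r : ((ℝ × ℝ) × ℝ) × ℝ ↦
      planeWave r.1.1 (r.2, r.2 ^ 3) := by
    unfold planeWave
    fun_prop
  exact (hwave.mul hv_shear).integral_prod_right'

lemma exists_eLpNorm_planeFourier_le_lintegral_airyShear :
    ∃ C : ℝ≥0, ∀ {v : ℝ × ℝ → ℂ}, Integrable v → MemLp v 2 →
      eLpNorm (planeFourier v) 8 ≤
        C * ∫⁻ σ, (∫⁻ ξ, ‖v (airyShear (σ, ξ))‖ₑ ^ 2) ^ (1 / 2 : ℝ) := by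
  obtain ⟨C, hC⟩ := exists_lintegral_enorm_airyExtension_pow_eight_le
  refine ⟨C ^ (1 / 8 : ℝ), fun {v} hv hv₂ ↦ ?_⟩
  have extension_le : ∀ᵐ σ,
      (∫⁻ z, ‖airyExtension (fun ξ ↦ v (airyShear (σ, ξ))) z‖ₑ ^ (8 : ℝ)) ^ (1 / 8 : ℝ) ≤
        C ^ (1 / 8 : ℝ) * (∫⁻ ξ, ‖v (airyShear (σ, ξ))‖ₑ ^ 2) ^ (1 / 2 : ℝ) := by
    filter_upwards [integrable_airyShear_ae hv, lintegral_enorm_airyShear_ne_top_ae hv₂]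
      with σ hσ hσ₂
    simp only [ENNReal.rpow_ofNat]
    refine (ENNReal.rpow_le_rpow (hC hσ hσ₂) (by norm_num)).trans_eq ?_
    rw [ENNReal.mul_rpow_of_nonneg _ _ (by norm_num), ← ENNReal.rpow_natCast_mul]
    norm_num
  let F (z : ℝ × ℝ) (σ : ℝ) : ℝ≥0∞ := ‖airyExtension (fun ξ ↦ v (airyShear (σ, ξ))) z‖ₑ
  have hF : AEMeasurable (Function.uncurry F) (volume.prod volume) :=
    (aestronglyMeasurable_airyExtension_airyShear hv.1).enorm
  calc eLpNorm (planeFourier v) 8 volume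
      ≤ (∫⁻ z, (∫⁻ σ, F z σ) ^ (8 : ℝ)) ^ (1 / 8 : ℝ) := by
        rw [eLpNorm_eq_lintegral_rpow_enorm_toReal (by norm_num) (by norm_num),
          ENNReal.toReal_ofNat]
        gcongr with z
        exact enorm_planeFourier_le_lintegral_airyExtension hv z
    _ ≤ ∫⁻ σ, (∫⁻ z, F z σ ^ (8 : ℝ)) ^ (1 / 8 : ℝ) :=
        lintegral_rpow_lintegral_le (by norm_num) hF
    _ ≤ ∫⁻ σ, C ^ (1 / 8 : ℝ) * (∫⁻ ξ, ‖v (airyShear (σ, ξ))‖ₑ ^ 2) ^ (1 / 2 : ℝ) :=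
        lintegral_mono_ae extension_le
    _ = _ := by
        rw [lintegral_const_mul' _ _ (by finiteness), ENNReal.coe_rpow_of_nonneg _ (by norm_num)]

lemma exists_eLpNorm_planeFourier_le_eBourgainNorm {b : ℝ} (hb : 1 / 2 < b) :
    ∃ C : ℝ≥0, ∀ {v : ℝ × ℝ → ℂ}, Integrable v → MemLp v 2 →
      eLpNorm (planeFourier v) 8 ≤ C * eBourgainNorm b v := by
  obtain ⟨C₁, hC₁⟩ := exists_eLpNorm_planeFourier_le_lintegral_airyShear
  obtain ⟨C₂, hC₂⟩ := exists_lintegral_airyShear_le_eBourgainNorm hb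
  refine ⟨C₁ * C₂, fun {v} hv hv₂ ↦ (hC₁ hv hv₂).trans ?_⟩
  rw [ENNReal.coe_mul, mul_assoc]
  gcongr
  exact hC₂ hv.1

end Transference

section Schwartz

lemma integrable_mul_norm_sq {E F : Type*} [NormedAddCommGroup E] [NormedSpace ℝ E]
    [NormedAddCommGroup F] [NormedSpace ℝ F] [MeasurableSpace E] [BorelSpace E]
    [SecondCountableTopology E] {μ : Measure E} [μ.HasTemperateGrowth] {g : E → ℝ}
    (hg : g.HasTemperateGrowth) (v : SchwartzMap E F) :
    Integrable (fun x ↦ g x * ‖v x‖ ^ 2) μ := by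
  have h := ((SchwartzMap.smulLeftCLM F g v).memLp 2 μ).norm.integrable_mul (v.memLp 2 μ).norm
  refine h.mono ?_ (.of_forall fun x ↦ ?_)
  · exact (hg.1.continuous.mul (v.continuous.norm.pow 2)).aestronglyMeasurable
  · simp [SchwartzMap.smulLeftCLM_apply_apply hg, norm_smul, sq, mul_assoc]

lemma integrable_bourgainWeight_mul_norm_sq (b : ℝ) (v : SchwartzMap (ℝ × ℝ) ℂ) :
    Integrable fun p : ℝ × ℝ ↦ (1 + |p.2 - p.1 ^ 3|) ^ (2 * b) * ‖v p‖ ^ 2 := by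
  obtain ⟨n, hn⟩ := exists_nat_ge (2 * b)
  have hg : Function.HasTemperateGrowth fun p : ℝ × ℝ ↦ (2 * (1 + (p.2 - p.1 ^ 3) ^ 2)) ^ n := by
    have h₁ := (ContinuousLinearMap.fst ℝ ℝ ℝ).hasTemperateGrowth
    have h₂ := (ContinuousLinearMap.snd ℝ ℝ ℝ).hasTemperateGrowth
    exact ((Function.HasTemperateGrowth.const (2 : ℝ)).mul
      ((Function.HasTemperateGrowth.const (1 : ℝ)).add ((h₂.sub (h₁.pow 3)).pow 2))).pow n
  refine (integrable_mul_norm_sq hg v).mono' ?_ (.of_forall fun p ↦ ?_)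
  · have := v.continuous.measurable
    exact AEMeasurable.aestronglyMeasurable (by fun_prop)
  · have one_le : 1 ≤ 1 + |p.2 - p.1 ^ 3| := le_add_of_nonneg_right (abs_nonneg _)
    have weight_le : (1 + |p.2 - p.1 ^ 3|) ^ (2 * b) ≤ (2 * (1 + (p.2 - p.1 ^ 3) ^ 2)) ^ n :=
      calc (1 + |p.2 - p.1 ^ 3|) ^ (2 * b) ≤ (1 + |p.2 - p.1 ^ 3|) ^ n := by
            rw [← Real.rpow_natCast _ n]
            exact Real.rpow_le_rpow_of_exponent_le one_le hn
        _ ≤ (2 * (1 + (p.2 - p.1 ^ 3) ^ 2)) ^ n := by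
            gcongr
            nlinarith [sq_abs (p.2 - p.1 ^ 3), sq_nonneg (|p.2 - p.1 ^ 3| - 1)]
    rw [Real.norm_of_nonneg (by positivity)]
    gcongr

lemma eBourgainNorm_schwartzMap (b : ℝ) (v : SchwartzMap (ℝ × ℝ) ℂ) :
    eBourgainNorm b v = ENNReal.ofReal
      ((∫ p : ℝ × ℝ, (1 + |p.2 - p.1 ^ 3|) ^ (2 * b) * ‖v p‖ ^ 2) ^ (1 / 2 : ℝ)) := by
  have nonneg (p : ℝ × ℝ) : 0 ≤ (1 + |p.2 - p.1 ^ 3|) ^ (2 * b) * ‖v p‖ ^ 2 := by positivity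
  rw [← ENNReal.ofReal_rpow_of_nonneg (integral_nonneg nonneg) (by norm_num),
    ofReal_integral_eq_lintegral_ofReal (integrable_bourgainWeight_mul_norm_sq b v)
      (.of_forall nonneg), eBourgainNorm]
  congr 1
  refine lintegral_congr fun p ↦ ?_
  rw [ENNReal.ofReal_mul (by positivity), ENNReal.ofReal_pow (norm_nonneg _), ofReal_norm]

end Schwartz

end Airy

/-- Strichartz-type estimate for the Airy Bourgain norm, case `p = 8`:
`‖u‖_{L⁸(ℝ²)} ≤ C ‖u‖_{X^{0,b}}` for `b > 1/2`. -/
theorem strichartz_L8 (b : ℝ) (hb : 1 / 2 < b) :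
    ∃ C > 0, ∀ u : SchwartzMap (ℝ × ℝ) ℂ,
      eLpNorm (fun p : ℝ × ℝ => u p) 8 volume ≤
        ENNReal.ofReal (C *
          (∫ p : ℝ × ℝ, (1 + |p.2 - p.1 ^ 3|) ^ (2 * b) *
            ‖∫ q : ℝ × ℝ, Complex.exp (-Complex.I * (q.1 * p.1 + q.2 * p.2)) * u q‖ ^ 2) ^
          ((1 : ℝ) / 2)) := by
  obtain ⟨C, hC⟩ := Airy.exists_eLpNorm_planeFourier_le_eBourgainNorm hb
  refine ⟨C + 1, by positivity, fun u ↦ ?_⟩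
  obtain ⟨v, hv⟩ := Airy.exists_schwartzMap_eq_planeFourier_neg u
  have inversion (z : ℝ × ℝ) : Airy.planeFourier v z = (2 * Real.pi) ^ 2 * u z := by
    rw [funext hv, Airy.planeFourier_planeFourier_neg]
  simp only [← Airy.planeFourier_neg_apply, ← hv]
  calc eLpNorm u 8 volume
      ≤ eLpNorm (Airy.planeFourier v) 8 volume := by
        refine eLpNorm_mono fun z ↦ ?_
        rw [inversion, norm_mul]
        refine le_mul_of_one_le_left (norm_nonneg _) ?_
        rw [norm_pow, norm_mul, Complex.norm_two, Complex.norm_of_nonneg Real.pi_pos.le]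
        exact one_le_pow₀ (by linarith [Real.pi_gt_three])
    _ ≤ C * Airy.eBourgainNorm b v := hC v.integrable (v.memLp 2)
    _ ≤ _ := by
        rw [Airy.eBourgainNorm_schwartzMap, ← ENNReal.ofReal_coe_nnreal,
          ← ENNReal.ofReal_mul C.coe_nonneg]
        gcongr
        exact le_add_of_nonneg_right zero_le_one
end

section
/- For every b > 1/2 there exists a constant C > 0 such that for every Schwartz function u : ℝ² → ℂ one has ‖u‖_{L^6(ℝ²)} ≤ C · ( ∫_{ℝ²} (1+|τ−ξ³|)^{2b} |û(ξ,τ)|² dξ dτ )^{1/2}. -/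
open MeasureTheory

/-!
Plancherel's theorem for `u³` gives `‖u‖₆³ = c ‖û ∗ û ∗ û‖₂`. By the Cauchy-Schwarz inequality,
the square of `û ∗ û ∗ û` is at most `w ∗ w ∗ w` times the triple convolution of `|û|² / w`, where
`w (ξ, τ) = (1 + |τ - ξ³|) ^ (-2b)`. The last function has integral `‖u‖⁶` in the `X^{0,b}` norm,
so it remains to bound `w ∗ w ∗ w`. As `(1 + |·|) ^ (-2b)` is integrable on the line, this reduces
to a bound on `∫∫ (1 + |s - x³ - y³ - (ξ - x - y)³|)⁻¹ dx dy` uniform in `ξ` and `s`.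

For fixed `a = x + y ≠ 0` the phase is quadratic in the remaining variable, of the form `A - 3am²`
with `A` a cubic polynomial in `a`, and the inner integral is at most a constant times
`|a| ^ (-1/2) * (1 + |A|) ^ (-1/4)`. Since `|A|` is at least a multiple of the cube of the distance
from `a` to the nearest root `z` of `A`, a rearrangement argument replaces `|a - z|` by `|a|`,
which leaves an integrable function of `a` that is independent of `ξ` and `s`.
-/

section Radial

open scoped ENNReal NNReal

lemma mul_le_mul_self_add_mul_self_of_antitone {α : Type*} [LinearOrder α] {f g : α → ℝ≥0∞}
    (hf : Antitone f) (hg : Antitone g) (x y : α) : f x * g y ≤ f x * g x + f y * g y := by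
  rcases le_total x y with h | h
  · exact (mul_le_mul_right (hg h) _).trans le_self_add
  · exact (mul_le_mul_left (hf h) _).trans le_add_self

lemma lintegral_mul_enorm_sub_le {G : Type*} [NormedAddCommGroup G] [MeasurableSpace G]
    [BorelSpace G] (μ : Measure G) [μ.IsAddRightInvariant] {f g : ℝ≥0∞ → ℝ≥0∞}
    (hf : Antitone f) (hg : Antitone g) (a : G) :
    ∫⁻ x, f ‖x‖ₑ * g ‖x - a‖ₑ ∂μ ≤ 2 * ∫⁻ x, f ‖x‖ₑ * g ‖x‖ₑ ∂μ := by
  have hfm := hf.measurable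
  have hgm := hg.measurable
  calc ∫⁻ x, f ‖x‖ₑ * g ‖x - a‖ₑ ∂μ
      ≤ ∫⁻ x, f ‖x‖ₑ * g ‖x‖ₑ + f ‖x - a‖ₑ * g ‖x - a‖ₑ ∂μ :=
        lintegral_mono fun x => mul_le_mul_self_add_mul_self_of_antitone hf hg _ _
    _ = 2 * ∫⁻ x, f ‖x‖ₑ * g ‖x‖ₑ ∂μ := by
        rw [lintegral_add_left (by fun_prop),
          lintegral_sub_right_eq_self (fun x => f ‖x‖ₑ * g ‖x‖ₑ), two_mul]

lemma antitone_rpow_neg {z : ℝ} (hz : 0 ≤ z) : Antitone fun x : ℝ≥0∞ => x ^ (-z) := by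
  intro x y hxy
  simp only [ENNReal.rpow_neg]
  gcongr

lemma rpow_neg_le_two_rpow_mul_one_add_rpow_neg {p : ℝ} (hp : 0 ≤ p) {r : ℝ≥0∞} (hr : 1 ≤ r) :
    r ^ (-p) ≤ 2 ^ p * (1 + r) ^ (-p) := by
  calc r ^ (-p) = 2 ^ p * (2 * r) ^ (-p) := by
        rw [ENNReal.rpow_neg, ENNReal.rpow_neg, ENNReal.mul_rpow_of_nonneg _ _ hp,
          ENNReal.mul_inv (by simp) (by simp), ← mul_assoc,
          ENNReal.mul_inv_cancel (by simp) (by simp), one_mul]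
    _ ≤ 2 ^ p * (1 + r) ^ (-p) := by
        gcongr 2 ^ p * ?_
        exact antitone_rpow_neg hp (by rw [two_mul]; gcongr)

lemma exists_aroots_mul_norm_sub_pow_le {R K : Type*} [Field R] [NormedField K]
    [IsAlgClosed K] [Algebra R K] {P : Polynomial R} (hP : P.natDegree ≠ 0) (x : K) :
    ∃ z ∈ P.aroots K, ‖algebraMap R K P.leadingCoeff‖ * ‖x - z‖ ^ P.natDegree ≤ ‖P.aeval x‖ := by
  have h_split : (P.map (algebraMap R K)).Splits := IsAlgClosed.splits _
  have h_card : (P.aroots K).card = P.natDegree := by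
    rw [← Polynomial.natDegree_map (algebraMap R K), h_split.natDegree_eq_card_roots]
  have h_ne : P.aroots K ≠ 0 := fun h => hP (by rw [← h_card, h, Multiset.card_zero])
  obtain ⟨z, hz, hz_min⟩ := Multiset.exists_min_image (fun w => ‖x - w‖₊) h_ne
  refine ⟨z, hz, ?_⟩
  have h_prod : ‖x - z‖₊ ^ P.natDegree ≤ ((P.aroots K).map fun w => ‖x - w‖₊).prod := by
    rw [← h_card, ← Multiset.card_map (fun w => ‖x - w‖₊)]
    exact Multiset.pow_card_le_prod fun r hr => by
      obtain ⟨w, hw, rfl⟩ := Multiset.mem_map.1 hr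
      exact hz_min w hw
  rw [h_split.aeval_eq_prod_aroots, norm_mul]
  have h_norm : ‖((P.aroots K).map fun w => x - w).prod‖₊ =
      ((P.aroots K).map fun w => ‖x - w‖₊).prod := by
    simpa using map_multiset_prod (nnnormHom (α := K)) ((P.aroots K).map fun w => x - w)
  gcongr
  exact_mod_cast h_prod.trans_eq h_norm.symm

lemma lintegral_mul_enorm_eval_le {f g : ℝ≥0∞ → ℝ≥0∞} (hf : Antitone f) (hg : Antitone g)
    {P : Polynomial ℝ} (hP : P.natDegree ≠ 0) :
    ∫⁻ x : ℝ, f ‖x‖ₑ * g ‖P.eval x‖ₑ ≤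
      P.natDegree * (2 * ∫⁻ x : ℝ, f ‖x‖ₑ * g (‖P.leadingCoeff‖ₑ * ‖x‖ₑ ^ P.natDegree)) := by
  set G : ℝ≥0∞ → ℝ≥0∞ := fun r => g (‖P.leadingCoeff‖ₑ * r ^ P.natDegree)
  have hG : Antitone G := fun r s hrs => hg (by gcongr)
  have h_pointwise (x : ℝ) : f ‖x‖ₑ * g ‖P.eval x‖ₑ ≤
      ∑ z ∈ (P.aroots ℂ).toFinset, f ‖x‖ₑ * G ‖x - z.re‖ₑ := by
    obtain ⟨z, hz, hz_le⟩ := exists_aroots_mul_norm_sub_pow_le hP (x : ℂ)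
    have h_re : ‖x - z.re‖ ≤ ‖(x : ℂ) - z‖ := by
      simpa using Complex.abs_re_le_norm ((x : ℂ) - z)
    have h_eval : ‖P.leadingCoeff‖ * ‖x - z.re‖ ^ P.natDegree ≤ ‖P.eval x‖ := by
      have h_aeval : P.aeval (x : ℂ) = ((P.eval x : ℝ) : ℂ) :=
        Polynomial.aeval_algebraMap_apply_eq_algebraMap_eval x P
      rw [h_aeval, Complex.norm_real, norm_algebraMap'] at hz_le
      refine le_trans ?_ hz_le
      gcongr
    have h_enorm : ‖P.leadingCoeff‖ₑ * ‖x - z.re‖ₑ ^ P.natDegree ≤ ‖P.eval x‖ₑ := by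
      rw [← enorm_pow, ← enorm_mul, enorm_le_iff_norm_le, norm_mul, norm_pow]
      exact h_eval
    exact (mul_le_mul_right (hg h_enorm) _).trans
      (Finset.single_le_sum_of_canonicallyOrdered
        (f := fun z : ℂ => f ‖x‖ₑ * G ‖x - z.re‖ₑ) (Multiset.mem_toFinset.2 hz))
  have h_card : ((P.aroots ℂ).toFinset.card : ℝ≥0∞) ≤ P.natDegree := by
    exact_mod_cast (Multiset.toFinset_card_le _).trans
      ((Polynomial.card_roots' _).trans_eq (Polynomial.natDegree_map _))
  have hfm := hf.measurable
  have hGm := hG.measurable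
  calc ∫⁻ x : ℝ, f ‖x‖ₑ * g ‖P.eval x‖ₑ
      ≤ ∑ z ∈ (P.aroots ℂ).toFinset, ∫⁻ x : ℝ, f ‖x‖ₑ * G ‖x - z.re‖ₑ := by
        rw [← lintegral_finsetSum _ fun z _ => by fun_prop]
        exact lintegral_mono h_pointwise
    _ ≤ (P.aroots ℂ).toFinset.card • (2 * ∫⁻ x : ℝ, f ‖x‖ₑ * G ‖x‖ₑ) :=
        Finset.sum_le_card_nsmul _ _ _ fun z _ => lintegral_mul_enorm_sub_le volume hf hG z.re
    _ ≤ P.natDegree * (2 * ∫⁻ x : ℝ, f ‖x‖ₑ * G ‖x‖ₑ) := by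
        rw [nsmul_eq_mul]
        gcongr

lemma lintegral_one_add_enorm_rpow_neg_lt_top {E : Type*} [NormedAddCommGroup E] [NormedSpace ℝ E]
    [FiniteDimensional ℝ E] [MeasurableSpace E] [BorelSpace E] {μ : Measure E} [μ.IsAddHaarMeasure]
    {r : ℝ} (hr : Module.finrank ℝ E < r) : ∫⁻ x, (1 + ‖x‖ₑ) ^ (-r) ∂μ < ⊤ := by
  refine lt_of_eq_of_lt (lintegral_congr fun x => ?_) (finite_integral_one_add_norm (μ := μ) hr)
  rw [← ENNReal.ofReal_rpow_of_pos (by positivity), ENNReal.ofReal_add (by simp) (by simp),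
    ofReal_norm, ENNReal.ofReal_one]

lemma lintegral_enorm_rpow_mul_one_add_enorm_rpow_lt_top {E : Type*} [NormedAddCommGroup E]
    [NormedSpace ℝ E] [FiniteDimensional ℝ E] [MeasurableSpace E] [BorelSpace E] (μ : Measure E)
    [μ.IsAddHaarMeasure] {p q : ℝ} (hp₀ : 0 ≤ p) (hp : p < Module.finrank ℝ E)
    (hpq : Module.finrank ℝ E < p + q) :
    ∫⁻ x, ‖x‖ₑ ^ (-p) * (1 + ‖x‖ₑ) ^ (-q) ∂μ < ⊤ := by
  have hd : 1 ≤ Module.finrank ℝ E := by exact_mod_cast hp₀.trans_lt hp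
  have : Nontrivial E := Module.nontrivial_of_finrank_pos (R := ℝ) hd
  have hq : 0 ≤ q := by linarith
  have h_near : ∫⁻ x in Metric.closedBall 0 1, ‖x‖ₑ ^ (-p) ∂μ < ⊤ := by
    have h_loc : LocallyIntegrable (fun x : E => ‖x‖ ^ (-p)) μ :=
      locallyIntegrable_of_norm_le_rpow (C := 1) hd hp
        (ae_of_all _ fun x => by rw [one_mul, Real.norm_of_nonneg (by positivity)])
        (Measurable.aestronglyMeasurable (by fun_prop))
    refine (lintegral_congr_ae ?_).trans_lt (h_loc.integrableOn_isCompact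
      (isCompact_closedBall 0 1)).2
    filter_upwards [ae_restrict_of_ae (Measure.ae_ne μ 0)] with x hx
    rw [← ofReal_norm, ENNReal.ofReal_rpow_of_pos (norm_pos_iff.2 hx),
      Real.enorm_of_nonneg (by positivity)]
  have h_far : ∫⁻ x, 2 ^ p * (1 + ‖x‖ₑ) ^ (-(p + q)) ∂μ < ⊤ := by
    rw [lintegral_const_mul _ (by fun_prop)]
    exact ENNReal.mul_lt_top (by finiteness) (lintegral_one_add_enorm_rpow_neg_lt_top hpq)
  rw [← lintegral_add_compl _ (Metric.isClosed_closedBall (x := (0 : E)) (ε := 1)).measurableSet]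
  refine ENNReal.add_lt_top.2 ⟨(lintegral_mono fun x => ?_).trans_lt h_near,
    (setLIntegral_mono (by fun_prop) fun x hx => ?_).trans_lt
      ((setLIntegral_le_lintegral _ _).trans_lt h_far)⟩
  · refine mul_le_of_le_one_right' ?_
    simpa using antitone_rpow_neg hq (le_self_add : 1 ≤ 1 + ‖x‖ₑ)
  · have hx1 : 1 ≤ ‖x‖ₑ := by
      rw [← ofReal_norm, ENNReal.one_le_ofReal]
      simpa using (not_le.1 (mt mem_closedBall_zero_iff.2 hx)).le
    calc ‖x‖ₑ ^ (-p) * (1 + ‖x‖ₑ) ^ (-q)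
        ≤ 2 ^ p * (1 + ‖x‖ₑ) ^ (-p) * (1 + ‖x‖ₑ) ^ (-q) := by
          gcongr
          exact rpow_neg_le_two_rpow_mul_one_add_rpow_neg hp₀ hx1
      _ = 2 ^ p * (1 + ‖x‖ₑ) ^ (-(p + q)) := by
          rw [neg_add, ENNReal.rpow_add _ _ (by simp) (by finiteness), mul_assoc]

/-- Integrable profile for the bound on `(1 + |A|) ^ (1/4) * (1 + |A - n²|)⁻¹` uniform in `A`, where
`d` is the distance from `n` to the real part of the nearest complex root of `A - n²`. -/
noncomputable def quadraticMajorant (d : ℝ≥0∞) : ℝ≥0∞ :=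
  2 * (d ^ (-(1 / 2) : ℝ) * (1 + d) ^ (-1 : ℝ))

@[fun_prop]
lemma measurable_quadraticMajorant : Measurable quadraticMajorant := by
  unfold quadraticMajorant
  fun_prop

lemma lintegral_quadraticMajorant_lt_top : ∫⁻ n : ℝ, quadraticMajorant ‖n‖ₑ < ⊤ := by
  simp only [quadraticMajorant]
  rw [lintegral_const_mul _ (by fun_prop)]
  refine ENNReal.mul_lt_top ENNReal.ofNat_lt_top ?_
  exact lintegral_enorm_rpow_mul_one_add_enorm_rpow_lt_top volume (by norm_num) (by norm_num)
    (by norm_num)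

lemma sqrt_one_add_mul_inv_one_add_le {d m y : ℝ≥0∞} (hd : d ^ 2 ≤ y) (hm : m * d ≤ y) :
    (1 + m) ^ (1 / 2 : ℝ) * (1 + y)⁻¹ ≤ quadraticMajorant d := by
  rcases eq_or_ne y ⊤ with rfl | hy
  · simp
  have h_one_add_sq : (1 + d) ^ 2 ≤ 2 * (1 + y) := by
    have h_convex := ENNReal.rpow_add_le_mul_rpow_add_rpow 1 d (p := 2) (by norm_num)
    norm_num at h_convex
    exact h_convex.trans (by gcongr)
  have h_mul : (1 + m) * d ≤ 2 * (1 + y) := by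
    have h_le : d ≤ 1 + y := by
      rcases le_total d 1 with h | h
      · exact h.trans le_self_add
      · exact (le_self_pow h two_ne_zero).trans (hd.trans le_add_self)
    rw [add_mul, one_mul, two_mul]
    exact add_le_add h_le (hm.trans le_add_self)
  have h_sq : ((1 + m) ^ (1 / 2 : ℝ) * (d ^ (1 / 2 : ℝ) * (1 + d))) ^ 2 ≤ (2 * (1 + y)) ^ 2 := by
    calc ((1 + m) ^ (1 / 2 : ℝ) * (d ^ (1 / 2 : ℝ) * (1 + d))) ^ 2
        = ((1 + m) * d) * (1 + d) ^ 2 := by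
          rw [mul_pow, mul_pow, ← mul_assoc, ← ENNReal.rpow_mul_natCast, ← ENNReal.rpow_mul_natCast]
          norm_num
      _ ≤ (2 * (1 + y)) ^ 2 := by
          rw [sq (2 * (1 + y))]
          gcongr
  have h_prod : (1 + m) ^ (1 / 2 : ℝ) * (d ^ (1 / 2 : ℝ) * (1 + d)) ≤ 2 * (1 + y) :=
    (ENNReal.pow_le_pow_left_iff two_ne_zero).1 h_sq
  have h_top : d ≠ ⊤ := by
    rintro rfl
    exact hy (by simpa using hd)
  rw [quadraticMajorant, ENNReal.rpow_neg, ENNReal.rpow_neg_one, ← ENNReal.mul_inv (by simp [h_top])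
    (by simp), ← div_eq_mul_inv, ENNReal.div_le_iff (by simp) (by simp [hy]), mul_right_comm,
    ← div_eq_mul_inv, ENNReal.le_div_iff_mul_le (by simp) (.inr (by finiteness))]
  exact h_prod

lemma norm_sub_sq_le_and_norm_mul_norm_sub_le {𝕜 : Type*} [NormedField 𝕜] [NormedAlgebra ℝ 𝕜]
    {x r : 𝕜} (h : ‖x - r‖ ≤ ‖x + r‖) :
    ‖x - r‖ ^ 2 ≤ ‖r ^ 2 - x ^ 2‖ ∧ ‖r‖ * ‖x - r‖ ≤ ‖r ^ 2 - x ^ 2‖ := by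
  have h_factor : ‖r ^ 2 - x ^ 2‖ = ‖x + r‖ * ‖x - r‖ := by
    rw [← norm_mul, norm_sub_rev]
    ring_nf
  have h_le : ‖r‖ ≤ ‖x + r‖ := by
    have h_two : 2 * ‖r‖ = ‖(x + r) - (x - r)‖ := by
      rw [add_sub_sub_cancel, ← two_smul ℝ r, norm_smul, Real.norm_ofNat]
    linarith [norm_sub_le (x + r) (x - r)]
  rw [h_factor, sq]
  exact ⟨by gcongr, by gcongr⟩

lemma exists_enorm_sub_sq_le_and_enorm_mul_enorm_sub_le (r : ℂ) (n : ℝ) :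
    ∃ s : ℝ, (s = r.re ∨ s = -r.re) ∧ ‖n - s‖ₑ ^ 2 ≤ ‖r ^ 2 - (n : ℂ) ^ 2‖ₑ ∧
      ‖r‖ₑ * ‖n - s‖ₑ ≤ ‖r ^ 2 - (n : ℂ) ^ 2‖ₑ := by
  wlog h : ‖(n : ℂ) - r‖ ≤ ‖(n : ℂ) + r‖ generalizing r
  · have h_neg := this (-r) (by rw [sub_neg_eq_add, ← sub_eq_add_neg]; exact (not_le.1 h).le)
    simpa [or_comm] using h_neg
  have h_re : ‖n - r.re‖ₑ ≤ ‖(n : ℂ) - r‖ₑ := by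
    rw [enorm_le_iff_norm_le]
    simpa using Complex.abs_re_le_norm ((n : ℂ) - r)
  obtain ⟨h_sq, h_mul⟩ := norm_sub_sq_le_and_norm_mul_norm_sub_le h
  rw [← norm_pow, ← enorm_le_iff_norm_le, enorm_pow] at h_sq
  rw [← norm_mul, ← enorm_le_iff_norm_le, enorm_mul] at h_mul
  exact ⟨r.re, .inl rfl, (by gcongr : _ ≤ _).trans h_sq, (by gcongr : _ ≤ _).trans h_mul⟩

lemma exists_rpow_mul_inv_one_add_enorm_sub_sq_le (A : ℝ) :
    ∃ s : ℝ, ∀ n : ℝ, (1 + ‖A‖ₑ) ^ (1 / 4 : ℝ) * (1 + ‖A - n ^ 2‖ₑ)⁻¹ ≤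
      quadraticMajorant ‖n - s‖ₑ + quadraticMajorant ‖n + s‖ₑ := by
  obtain ⟨r, hr⟩ := IsAlgClosed.exists_pow_nat_eq (A : ℂ) two_pos
  have h_real : ∀ x : ℝ, ‖(x : ℂ)‖ₑ = ‖x‖ₑ := Complex.ofRealLI.enorm_map
  have h_weight : (1 + ‖A‖ₑ) ^ (1 / 4 : ℝ) ≤ (1 + ‖r‖ₑ) ^ (1 / 2 : ℝ) := by
    calc (1 + ‖A‖ₑ) ^ (1 / 4 : ℝ) = (1 + ‖r‖ₑ ^ 2) ^ (1 / 4 : ℝ) := by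
          rw [← enorm_pow, hr, h_real]
      _ ≤ ((1 + ‖r‖ₑ) ^ 2) ^ (1 / 4 : ℝ) := by
          gcongr
          simpa using pow_add_pow_le zero_le zero_le two_ne_zero (x := 1) (y := ‖r‖ₑ)
      _ = (1 + ‖r‖ₑ) ^ (1 / 2 : ℝ) := by
          rw [← ENNReal.rpow_natCast_mul]
          norm_num
  have h_phase (n : ℝ) : ‖r ^ 2 - (n : ℂ) ^ 2‖ₑ = ‖A - n ^ 2‖ₑ := by
    rw [hr, ← h_real]
    push_cast
    rfl
  refine ⟨r.re, fun n => ?_⟩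
  obtain ⟨s, hs, h_sq, h_mul⟩ := exists_enorm_sub_sq_le_and_enorm_mul_enorm_sub_le r n
  rw [h_phase] at h_sq h_mul
  refine (mul_le_mul_left h_weight _).trans ((sqrt_one_add_mul_inv_one_add_le h_sq h_mul).trans ?_)
  rcases hs with rfl | rfl
  · exact le_self_add
  · exact sub_neg_eq_add n r.re ▸ le_add_self

lemma exists_lintegral_inv_one_add_enorm_sub_sq_le :
    ∃ C : ℝ≥0, ∀ A : ℝ,
      ∫⁻ n : ℝ, (1 + ‖A - n ^ 2‖ₑ)⁻¹ ≤ C * (1 + ‖A‖ₑ) ^ (-(1 / 4) : ℝ) := by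
  lift ∫⁻ n : ℝ, quadraticMajorant ‖n‖ₑ to ℝ≥0 using lintegral_quadraticMajorant_lt_top.ne
    with I hI
  refine ⟨2 * I, fun A => ?_⟩
  obtain ⟨s, hs⟩ := exists_rpow_mul_inv_one_add_enorm_sub_sq_le A
  have h_bound : (1 + ‖A‖ₑ) ^ (1 / 4 : ℝ) * ∫⁻ n : ℝ, (1 + ‖A - n ^ 2‖ₑ)⁻¹ ≤ 2 * I := by
    calc (1 + ‖A‖ₑ) ^ (1 / 4 : ℝ) * ∫⁻ n : ℝ, (1 + ‖A - n ^ 2‖ₑ)⁻¹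
        = ∫⁻ n : ℝ, (1 + ‖A‖ₑ) ^ (1 / 4 : ℝ) * (1 + ‖A - n ^ 2‖ₑ)⁻¹ :=
          (lintegral_const_mul _ (by fun_prop)).symm
      _ ≤ ∫⁻ n : ℝ, quadraticMajorant ‖n - s‖ₑ + quadraticMajorant ‖n + s‖ₑ := lintegral_mono hs
      _ = 2 * I := by
          rw [lintegral_add_left (by fun_prop),
            lintegral_sub_right_eq_self (fun n => quadraticMajorant ‖n‖ₑ),
            lintegral_add_right_eq_self (fun n => quadraticMajorant ‖n‖ₑ), ← hI, two_mul]
  rw [ENNReal.rpow_neg, ← div_eq_mul_inv, ENNReal.le_div_iff_mul_le (by simp) (by simp), mul_comm]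
  exact_mod_cast h_bound

lemma lintegral_comp_smul {E : Type*} [NormedAddCommGroup E] [NormedSpace ℝ E]
    [FiniteDimensional ℝ E] [MeasurableSpace E] [BorelSpace E] (μ : Measure E)
    [μ.IsAddHaarMeasure] (f : E → ℝ≥0∞) {r : ℝ} (hr : r ≠ 0) :
    ∫⁻ x, f (r • x) ∂μ = ENNReal.ofReal |(r ^ Module.finrank ℝ E)⁻¹| * ∫⁻ x, f x ∂μ := by
  rw [← smul_eq_mul, ← lintegral_smul_measure, ← Measure.map_addHaar_smul μ hr]
  exact ((Homeomorph.smulOfNeZero r hr).measurableEmbedding.lintegral_map f).symm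

lemma exists_lintegral_inv_one_add_enorm_sub_mul_sq_le :
    ∃ C : ℝ≥0, ∀ A c : ℝ, c ≠ 0 → ∫⁻ m : ℝ, (1 + ‖A - c * m ^ 2‖ₑ)⁻¹ ≤
      C * (‖c‖ₑ ^ (-(1 / 2) : ℝ) * (1 + ‖A‖ₑ) ^ (-(1 / 4) : ℝ)) := by
  obtain ⟨C, hC⟩ := exists_lintegral_inv_one_add_enorm_sub_sq_le
  refine ⟨C, fun A c hc => ?_⟩
  wlog hc_pos : 0 < c generalizing A c
  · have h_neg := this (-A) (-c) (neg_ne_zero.2 hc) (by grind)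
    rw [enorm_neg, enorm_neg] at h_neg
    refine (lintegral_congr fun m => ?_).trans_le h_neg
    rw [← enorm_neg, neg_sub', neg_mul]
  have h_jacobian : ENNReal.ofReal |(√c ^ Module.finrank ℝ ℝ)⁻¹| = ‖c‖ₑ ^ (-(1 / 2) : ℝ) := by
    rw [Module.finrank_self, pow_one, abs_of_pos (by positivity), Real.sqrt_eq_rpow,
      ← Real.rpow_neg hc_pos.le, ← ENNReal.ofReal_rpow_of_pos hc_pos,
      Real.enorm_of_nonneg hc_pos.le]
  calc ∫⁻ m : ℝ, (1 + ‖A - c * m ^ 2‖ₑ)⁻¹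
      = ∫⁻ m : ℝ, (1 + ‖A - (√c • m) ^ 2‖ₑ)⁻¹ := by
        simp only [smul_eq_mul, mul_pow, Real.sq_sqrt hc_pos.le]
    _ = ‖c‖ₑ ^ (-(1 / 2) : ℝ) * ∫⁻ n : ℝ, (1 + ‖A - n ^ 2‖ₑ)⁻¹ := by
        rw [lintegral_comp_smul volume (fun n => (1 + ‖A - n ^ 2‖ₑ)⁻¹) (by positivity),
          h_jacobian]
    _ ≤ C * (‖c‖ₑ ^ (-(1 / 2) : ℝ) * (1 + ‖A‖ₑ) ^ (-(1 / 4) : ℝ)) := by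
        rw [mul_left_comm]
        gcongr
        exact hC A

lemma one_add_mul_pow_three_rpow_neg_le (r : ℝ≥0∞) :
    (1 + ‖(3 / 4 : ℝ)‖ₑ * r ^ 3) ^ (-(1 / 4) : ℝ) ≤ 2 * (1 + r) ^ (-(3 / 4) : ℝ) := by
  have h_coeff : 4 ≤ 16 * ‖(3 / 4 : ℝ)‖ₑ := by
    rw [Real.enorm_of_nonneg (by norm_num), ← ENNReal.ofReal_ofNat, ← ENNReal.ofReal_ofNat 16,
      ← ENNReal.ofReal_mul (by norm_num)]
    gcongr
    norm_num
  have h_cube : (1 + r) ^ 3 ≤ 16 * (1 + ‖(3 / 4 : ℝ)‖ₑ * r ^ 3) := by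
    calc (1 + r) ^ 3 ≤ 4 * (1 + r ^ 3) := by
          have h_convex := ENNReal.rpow_add_le_mul_rpow_add_rpow 1 r (p := 3) (by norm_num)
          norm_num at h_convex
          exact h_convex
      _ ≤ 16 * 1 + 16 * ‖(3 / 4 : ℝ)‖ₑ * r ^ 3 := by
          rw [mul_add]
          gcongr
          norm_num
      _ = 16 * (1 + ‖(3 / 4 : ℝ)‖ₑ * r ^ 3) := by ring
  have h_root : (1 + r) ^ (3 / 4 : ℝ) ≤ 2 * (1 + ‖(3 / 4 : ℝ)‖ₑ * r ^ 3) ^ (1 / 4 : ℝ) := by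
    have h_two : (2 : ℝ≥0∞) = 16 ^ (1 / 4 : ℝ) := by
      rw [show (16 : ℝ≥0∞) = 2 ^ 4 by norm_num, ← ENNReal.rpow_natCast_mul]
      norm_num
    have h_three : (1 + r) ^ (3 / 4 : ℝ) = ((1 + r) ^ 3) ^ (1 / 4 : ℝ) := by
      rw [← ENNReal.rpow_natCast_mul]
      norm_num
    rw [h_two, h_three, ← ENNReal.mul_rpow_of_nonneg _ _ (by norm_num)]
    gcongr
  rw [ENNReal.rpow_neg, ENNReal.rpow_neg, ← div_eq_mul_inv,
    ENNReal.le_div_iff_mul_le (by simp) (by simp), mul_comm, ← div_eq_mul_inv]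
  exact ENNReal.div_le_of_le_mul h_root

lemma exists_lintegral_enorm_rpow_mul_one_add_enorm_cubic_rpow_le :
    ∃ C : ℝ≥0, ∀ ξ s : ℝ, ∫⁻ a : ℝ, ‖a‖ₑ ^ (-(1 / 2) : ℝ) *
      (1 + ‖s - a ^ 3 / 4 - (ξ - a) ^ 3‖ₑ) ^ (-(1 / 4) : ℝ) ≤ C := by
  have h_fin : ∫⁻ a : ℝ, ‖a‖ₑ ^ (-(1 / 2) : ℝ) * (1 + ‖a‖ₑ) ^ (-(3 / 4) : ℝ) < ⊤ :=
    lintegral_enorm_rpow_mul_one_add_enorm_rpow_lt_top volume (by norm_num) (by norm_num)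
      (by norm_num)
  lift ∫⁻ a : ℝ, ‖a‖ₑ ^ (-(1 / 2) : ℝ) * (1 + ‖a‖ₑ) ^ (-(3 / 4) : ℝ) to ℝ≥0 using h_fin.ne
    with J hJ
  refine ⟨3 * (2 * (2 * J)), fun ξ s => ?_⟩
  set Q : Cubic ℝ := ⟨3 / 4, -3 * ξ, 3 * ξ ^ 2, s - ξ ^ 3⟩ with hQ
  have hQa : Q.a ≠ 0 := by norm_num [hQ]
  have h_eval (a : ℝ) : Q.toPoly.eval a = s - a ^ 3 / 4 - (ξ - a) ^ 3 := by
    simp only [hQ, Cubic.toPoly, Polynomial.eval_add, Polynomial.eval_mul, Polynomial.eval_C,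
      Polynomial.eval_pow, Polynomial.eval_X]
    ring
  have h_roots := lintegral_mul_enorm_eval_le
    (antitone_rpow_neg (z := 1 / 2) (by norm_num))
    ((antitone_rpow_neg (z := 1 / 4) (by norm_num)).comp_monotone (add_right_mono (a := 1)))
    (P := Q.toPoly) (by rw [Cubic.natDegree_of_a_ne_zero hQa]; norm_num)
  simp only [Cubic.natDegree_of_a_ne_zero hQa, Cubic.leadingCoeff_of_a_ne_zero hQa, h_eval]
    at h_roots
  calc ∫⁻ a : ℝ, ‖a‖ₑ ^ (-(1 / 2) : ℝ) * (1 + ‖s - a ^ 3 / 4 - (ξ - a) ^ 3‖ₑ) ^ (-(1 / 4) : ℝ)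
      ≤ 3 * (2 * ∫⁻ a : ℝ, ‖a‖ₑ ^ (-(1 / 2) : ℝ) *
          (1 + ‖(3 / 4 : ℝ)‖ₑ * ‖a‖ₑ ^ 3) ^ (-(1 / 4) : ℝ)) := h_roots
    _ ≤ 3 * (2 * ∫⁻ a : ℝ, ‖a‖ₑ ^ (-(1 / 2) : ℝ) * (2 * (1 + ‖a‖ₑ) ^ (-(3 / 4) : ℝ))) := by
        gcongr
        exact one_add_mul_pow_three_rpow_neg_le _
    _ = ↑(3 * (2 * (2 * J))) := by
        simp only [mul_left_comm _ (2 : ℝ≥0∞)]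
        rw [lintegral_const_mul _ (by fun_prop), ← hJ]
        push_cast
        ring

lemma lintegral_inv_one_add_enorm_cubic_eq (ξ s a : ℝ) :
    ∫⁻ y : ℝ, (1 + ‖s - y ^ 3 - (a - y) ^ 3 - (ξ - a) ^ 3‖ₑ)⁻¹ =
      ∫⁻ m : ℝ, (1 + ‖s - a ^ 3 / 4 - (ξ - a) ^ 3 - 3 * a * m ^ 2‖ₑ)⁻¹ := by
  rw [← lintegral_add_right_eq_self _ (a / 2)]
  congr! 4
  ring_nf

lemma exists_lintegral_lintegral_inv_one_add_enorm_cubic_le :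
    ∃ C : ℝ≥0, ∀ ξ s : ℝ,
      ∫⁻ a : ℝ, ∫⁻ y : ℝ, (1 + ‖s - y ^ 3 - (a - y) ^ 3 - (ξ - a) ^ 3‖ₑ)⁻¹ ≤ C := by
  obtain ⟨C, hC⟩ := exists_lintegral_inv_one_add_enorm_sub_mul_sq_le
  obtain ⟨J, hJ⟩ := exists_lintegral_enorm_rpow_mul_one_add_enorm_cubic_rpow_le
  refine ⟨C * J, fun ξ s => ?_⟩
  calc ∫⁻ a : ℝ, ∫⁻ y : ℝ, (1 + ‖s - y ^ 3 - (a - y) ^ 3 - (ξ - a) ^ 3‖ₑ)⁻¹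
      ≤ ∫⁻ a : ℝ, C * (‖a‖ₑ ^ (-(1 / 2) : ℝ) *
          (1 + ‖s - a ^ 3 / 4 - (ξ - a) ^ 3‖ₑ) ^ (-(1 / 4) : ℝ)) := by
        refine lintegral_mono_ae ?_
        filter_upwards [Measure.ae_ne volume 0] with a ha
        rw [lintegral_inv_one_add_enorm_cubic_eq]
        refine (hC _ _ (mul_ne_zero three_ne_zero ha)).trans ?_
        gcongr C * (?_ * _)
        refine antitone_rpow_neg (by norm_num) ?_
        rw [enorm_le_iff_norm_le, norm_mul, Real.norm_ofNat]
        linarith [norm_nonneg a]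
    _ ≤ ↑(C * J) := by
        rw [lintegral_const_mul' _ _ ENNReal.coe_ne_top, ENNReal.coe_mul]
        gcongr
        exact hJ ξ s

end Radial

section LConvolution

open scoped ENNReal

lemma sq_lintegral_le_lintegral_mul_lintegral {α : Type*} [MeasurableSpace α] {μ : Measure α}
    {f g h : α → ℝ≥0∞} (hg : AEMeasurable g μ) (hh : AEMeasurable h μ)
    (hf : ∀ x, f x ^ 2 ≤ g x * h x) :
    (∫⁻ x, f x ∂μ) ^ 2 ≤ (∫⁻ x, g x ∂μ) * ∫⁻ x, h x ∂μ := by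
  have h_le (x : α) : f x ≤ g x ^ (1 / 2 : ℝ) * h x ^ (1 / 2 : ℝ) := by
    rw [← ENNReal.mul_rpow_of_nonneg _ _ (by norm_num), one_div, ENNReal.le_rpow_inv_iff two_pos,
      ENNReal.rpow_two]
    exact hf x
  have h_sq (y : ℝ≥0∞) : (y ^ (1 / 2 : ℝ)) ^ (2 : ℝ) = y := by
    rw [← ENNReal.rpow_mul, one_div_mul_cancel two_ne_zero, ENNReal.rpow_one]
  have h_cauchy := ENNReal.lintegral_mul_le_Lp_mul_Lq μ Real.HolderConjugate.two_two
    (hg.pow_const (1 / 2 : ℝ)) (hh.pow_const (1 / 2 : ℝ))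
  simp only [Pi.mul_apply, h_sq] at h_cauchy
  calc (∫⁻ x, f x ∂μ) ^ 2
      ≤ ((∫⁻ x, g x ∂μ) ^ (1 / 2 : ℝ) * (∫⁻ x, h x ∂μ) ^ (1 / 2 : ℝ)) ^ 2 := by
        gcongr
        exact (lintegral_mono h_le).trans h_cauchy
    _ = (∫⁻ x, g x ∂μ) * ∫⁻ x, h x ∂μ := by
        rw [← ENNReal.rpow_two, ENNReal.mul_rpow_of_nonneg _ _ zero_le_two, h_sq, h_sq]

lemma lconvolution_comp_of_measurePreserving {G G' F : Type*} [AddGroup G] [MeasurableSpace G]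
    [AddGroup G'] [MeasurableSpace G'] [MeasurableAdd₂ G'] [MeasurableNeg G'] {μ : Measure G}
    {ν : Measure G'} [FunLike F G G'] [AddMonoidHomClass F G G'] {e : F}
    (he : MeasurePreserving e μ ν) {f g : G' → ℝ≥0∞} (hf : Measurable f) (hg : Measurable g) :
    (f ∘ e) ⋆ₗ[μ] (g ∘ e) = (f ⋆ₗ[ν] g) ∘ e := by
  ext x
  simp only [lconvolution_def, Function.comp_apply, map_add, map_neg]
  exact he.lintegral_comp (f := fun y => f y * g (-y + e x)) (by fun_prop)

section Group

variable {G : Type*} [AddCommGroup G] [MeasurableSpace G] [MeasurableAdd₂ G] [MeasurableNeg G]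
  {μ : Measure G}

lemma lintegral_lconvolution [SFinite μ] [μ.IsAddLeftInvariant] {f g : G → ℝ≥0∞}
    (hf : Measurable f) (hg : Measurable g) :
    ∫⁻ x, (f ⋆ₗ[μ] g) x ∂μ = (∫⁻ x, f x ∂μ) * ∫⁻ x, g x ∂μ := by
  simp only [lconvolution_def]
  rw [lintegral_lintegral_swap (by fun_prop), ← lintegral_mul_const _ hf]
  refine lintegral_congr fun y => ?_
  rw [lintegral_const_mul _ (by fun_prop), lintegral_add_left_eq_self g]

lemma sq_lconvolution_le {f₁ f₂ g₁ g₂ h₁ h₂ : G → ℝ≥0∞} (hg₁ : Measurable g₁) (hg₂ : Measurable g₂)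
    (hh₁ : Measurable h₁) (hh₂ : Measurable h₂) (hf₁ : ∀ x, f₁ x ^ 2 ≤ g₁ x * h₁ x)
    (hf₂ : ∀ x, f₂ x ^ 2 ≤ g₂ x * h₂ x) (x : G) :
    (f₁ ⋆ₗ[μ] f₂) x ^ 2 ≤ (g₁ ⋆ₗ[μ] g₂) x * (h₁ ⋆ₗ[μ] h₂) x := by
  refine sq_lintegral_le_lintegral_mul_lintegral (by fun_prop) (by fun_prop) fun y => ?_
  rw [mul_pow, mul_mul_mul_comm]
  gcongr
  exacts [hf₁ y, hf₂ _]

lemma lintegral_sq_lconvolution_le [SFinite μ] [μ.IsAddLeftInvariant] {f w g : G → ℝ≥0∞}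
    (hw : Measurable w) (hg : Measurable g) (hf : ∀ x, f x ^ 2 ≤ w x * g x) {M : ℝ≥0∞}
    (hM : ∀ x, (w ⋆ₗ[μ] w ⋆ₗ[μ] w) x ≤ M) :
    ∫⁻ x, (f ⋆ₗ[μ] f ⋆ₗ[μ] f) x ^ 2 ∂μ ≤ M * (∫⁻ x, g x ∂μ) ^ 3 := by
  calc ∫⁻ x, (f ⋆ₗ[μ] f ⋆ₗ[μ] f) x ^ 2 ∂μ ≤ ∫⁻ x, M * (g ⋆ₗ[μ] g ⋆ₗ[μ] g) x ∂μ := by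
        refine lintegral_mono fun x => (sq_lconvolution_le hw (by fun_prop) hg (by fun_prop) hf
          (sq_lconvolution_le hw hw hg hg hf hf) x).trans ?_
        gcongr
        exact hM x
    _ = M * (∫⁻ x, g x ∂μ) ^ 3 := by
        rw [lintegral_const_mul _ (by fun_prop), lintegral_lconvolution hg (by fun_prop),
          lintegral_lconvolution hg hg]
        ring

end Group

section Graph

variable {G H : Type*} [AddCommGroup G] [TopologicalSpace G] [IsTopologicalAddGroup G]
  [MeasurableSpace G] [BorelSpace G] [AddCommGroup H] [TopologicalSpace H]
  [IsTopologicalAddGroup H] [SecondCountableTopology H] [MeasurableSpace H] [BorelSpace H]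
  {μ : Measure G} {ν : Measure H} [SFinite μ] [SFinite ν] [ν.IsAddRightInvariant]
  {φ : G → H} {k : H → ℝ≥0∞}

lemma lconvolution_graph (hφ : Measurable φ) (hk : Measurable k) {F : G × H → ℝ≥0∞}
    (hF : Measurable F) (ξ : G) (τ : H) :
    ((fun p : G × H => k (p.2 - φ p.1)) ⋆ₗ[μ.prod ν] F) (ξ, τ) =
      ∫⁻ α, k α * ∫⁻ x, F (ξ - x, τ - α - φ x) ∂μ ∂ν := by
  rw [lconvolution_def, lintegral_prod _ (by fun_prop)]
  calc ∫⁻ x, ∫⁻ y, k (y - φ x) * F (-(x, y) + (ξ, τ)) ∂ν ∂μ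
      = ∫⁻ x, ∫⁻ α, k α * F (ξ - x, τ - α - φ x) ∂ν ∂μ := by
        refine lintegral_congr fun x => ?_
        rw [← lintegral_add_right_eq_self _ (φ x)]
        refine lintegral_congr fun α => ?_
        rw [add_sub_cancel_right, Prod.neg_mk, Prod.mk_add_mk, neg_add_eq_sub, neg_add_eq_sub,
          sub_add_eq_sub_sub]
    _ = ∫⁻ α, k α * ∫⁻ x, F (ξ - x, τ - α - φ x) ∂μ ∂ν := by
        rw [lintegral_lintegral_swap (by fun_prop)]
        exact lintegral_congr fun α => lintegral_const_mul _ (by fun_prop)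

lemma lconvolution_graph_le [SecondCountableTopology G] (hφ : Measurable φ) (hk : Measurable k)
    {M : ℝ≥0∞}
    (hM : ∀ ξ s, ∫⁻ x, ∫⁻ y, k (s - φ x - φ y - φ (ξ - x - y)) ∂μ ∂μ ≤ M) (p : G × H) :
    ((fun p : G × H => k (p.2 - φ p.1)) ⋆ₗ[μ.prod ν] (fun p : G × H => k (p.2 - φ p.1))
      ⋆ₗ[μ.prod ν] (fun p : G × H => k (p.2 - φ p.1))) p ≤ M * (∫⁻ α, k α ∂ν) ^ 2 := by
  obtain ⟨ξ, τ⟩ := p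
  have h_twice (α : H) : ∫⁻ x, ((fun p : G × H => k (p.2 - φ p.1)) ⋆ₗ[μ.prod ν]
      (fun p : G × H => k (p.2 - φ p.1))) (ξ - x, τ - α - φ x) ∂μ ≤ M * ∫⁻ β, k β ∂ν := by
    simp only [lconvolution_graph hφ hk (F := fun p : G × H => k (p.2 - φ p.1)) (by fun_prop)]
    rw [lintegral_lintegral_swap (by fun_prop), ← lintegral_const_mul _ hk]
    refine lintegral_mono fun β => ?_
    rw [lintegral_const_mul _ (by fun_prop), mul_comm]
    gcongr
    refine le_trans (le_of_eq ?_) (hM ξ (τ - α - β))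
    congr! 5
    abel
  rw [lconvolution_graph hφ hk (measurable_lconvolution _ (by fun_prop) (by fun_prop))]
  calc _ ≤ ∫⁻ α, k α * (M * ∫⁻ β, k β ∂ν) ∂ν := by
        gcongr with α
        exact h_twice α
    _ = M * (∫⁻ α, k α ∂ν) ^ 2 := by
        rw [lintegral_mul_const _ hk]
        ring

end Graph

end LConvolution

section Schwartz

open scoped ENNReal FourierTransform SchwartzMap

section Fourier

variable {V : Type*} [NormedAddCommGroup V] [InnerProductSpace ℝ V] [FiniteDimensional ℝ V]
  [MeasurableSpace V] [BorelSpace V]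

lemma lintegral_enorm_sq_fourier (f : 𝓢(V, ℂ)) : ∫⁻ x, ‖𝓕 f x‖ₑ ^ 2 = ∫⁻ x, ‖f x‖ₑ ^ 2 := by
  have h_sq (h : 𝓢(V, ℂ)) : ∫⁻ x, ‖h x‖ₑ ^ 2 = ENNReal.ofReal (∫ x, ‖h x‖ ^ 2) := by
    rw [ofReal_integral_eq_lintegral_ofReal ((h.memLp 2 volume).integrable_norm_pow two_ne_zero)
      (ae_of_all _ fun x => by positivity)]
    exact lintegral_congr fun x => by rw [ENNReal.ofReal_pow (norm_nonneg _), ofReal_norm]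
  rw [h_sq, h_sq, SchwartzMap.integral_norm_sq_fourier]

lemma enorm_convolution_mul_le (f g : 𝓢(V, ℂ)) (x : V) :
    ‖SchwartzMap.convolution (ContinuousLinearMap.mul ℂ ℂ) f g x‖ₑ ≤
      ((fun y => ‖f y‖ₑ) ⋆ₗ fun y => ‖g y‖ₑ) x := by
  rw [SchwartzMap.convolution_apply, convolution_def]
  refine (enorm_integral_le_lintegral_enorm _).trans_eq (lintegral_congr fun t => ?_)
  rw [ContinuousLinearMap.mul_apply', enorm_mul, neg_add_eq_sub]

lemma lintegral_enorm_fourier_pow_six_le (g : 𝓢(V, ℂ)) :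
    ∫⁻ x, ‖𝓕 g x‖ₑ ^ 6 ≤
      ∫⁻ x, ((fun y => ‖g y‖ₑ) ⋆ₗ (fun y => ‖g y‖ₑ) ⋆ₗ fun y => ‖g y‖ₑ) x ^ 2 := by
  let conv := SchwartzMap.convolution (E := V) (ContinuousLinearMap.mul ℂ ℂ)
  have h_cube (x : V) : 𝓕 (conv g (conv g g)) x = 𝓕 g x ^ 3 := by
    simp only [conv, SchwartzMap.fourier_convolution, SchwartzMap.pairing_apply_apply,
      ContinuousLinearMap.mul_apply']
    ring
  calc ∫⁻ x, ‖𝓕 g x‖ₑ ^ 6 = ∫⁻ x, ‖conv g (conv g g) x‖ₑ ^ 2 := by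
        rw [← lintegral_enorm_sq_fourier]
        exact lintegral_congr fun x => by rw [h_cube, enorm_pow, ← pow_mul]
    _ ≤ _ := by
        gcongr with x
        refine (enorm_convolution_mul_le g _ x).trans (lintegral_mono fun y => ?_)
        gcongr
        exact enorm_convolution_mul_le g g _

end Fourier

section Growth

variable {E F : Type*} [NormedAddCommGroup E] [NormedSpace ℝ E] [MeasurableSpace E] [BorelSpace E]
  [SecondCountableTopology E] [NormedAddCommGroup F] [NormedSpace ℝ F]

lemma integrable_mul_norm_sq_of_norm_le {μ : Measure E} [μ.HasTemperateGrowth] (g : 𝓢(E, F))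
    {f : E → ℝ} (hf : AEStronglyMeasurable f μ) {k : ℕ} (hfk : ∀ x, ‖f x‖ ≤ (1 + ‖x‖) ^ k) :
    Integrable (fun x => f x * ‖g x‖ ^ 2) μ := by
  simp only [sq, ← mul_assoc]
  refine g.integrable.norm.bdd_mul (hf.mul g.continuous.norm.aestronglyMeasurable)
    (ae_of_all _ fun x => ?_)
    (c := 2 ^ k * (Finset.Iic (k, 0)).sup (fun m => SchwartzMap.seminorm ℝ m.1 m.2) g)
  calc ‖f x * ‖g x‖‖ ≤ (1 + ‖x‖) ^ k * ‖g x‖ := by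
        rw [norm_mul, norm_norm]
        gcongr
        exact hfk x
    _ ≤ 2 ^ k * (Finset.Iic (k, 0)).sup (fun m => SchwartzMap.seminorm ℝ m.1 m.2) g := by
        simpa only [norm_iteratedFDeriv_zero] using
          SchwartzMap.one_add_le_sup_seminorm_apply (𝕜 := ℝ) (m := (k, 0)) le_rfl le_rfl g x

end Growth

end Schwartz

section Airy

open scoped ENNReal NNReal FourierTransform SchwartzMap

/-- The squared weight `(1 + |τ - ξ³|) ^ (2 * b)` of the Bourgain norm `X^{0,b}` associated to the
Airy equation, at `p = (ξ, τ)`. It is `ℝ≥0∞`-valued so that no integrability is presupposed. -/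
noncomputable def airyWeight (b : ℝ) (p : ℝ × ℝ) : ℝ≥0∞ :=
  (1 + ‖p.2 - p.1 ^ 3‖ₑ) ^ (2 * b)

@[fun_prop]
lemma measurable_airyWeight (b : ℝ) : Measurable (airyWeight b) := by
  unfold airyWeight
  fun_prop

lemma airyWeight_neg_mul_airyWeight (b : ℝ) (p : ℝ × ℝ) :
    airyWeight (-b) p * airyWeight b p = 1 := by
  rw [airyWeight, airyWeight, ← ENNReal.rpow_add _ _ (by simp) (by finiteness), mul_neg,
    neg_add_cancel, ENNReal.rpow_zero]

lemma exists_lconvolution_airyWeight_neg_le {b : ℝ} (hb : 1 / 2 < b) :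
    ∃ C : ℝ≥0, ∀ p,
      (airyWeight (-b) ⋆ₗ airyWeight (-b) ⋆ₗ airyWeight (-b)) p ≤ C := by
  obtain ⟨C, hC⟩ := exists_lintegral_lintegral_inv_one_add_enorm_cubic_le
  have h_mass : ∫⁻ y : ℝ, (1 + ‖y‖ₑ) ^ (2 * -b) < ⊤ := by
    rw [mul_neg]
    refine lintegral_one_add_enorm_rpow_neg_lt_top ?_
    rw [Module.finrank_self, Nat.cast_one]
    linarith
  lift ∫⁻ y : ℝ, (1 + ‖y‖ₑ) ^ (2 * -b) to ℝ≥0 using h_mass.ne with K hK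
  refine ⟨C * K ^ 2, fun p => ?_⟩
  rw [ENNReal.coe_mul, ENNReal.coe_pow, hK]
  refine lconvolution_graph_le (φ := (· ^ 3)) (k := fun y : ℝ => (1 + ‖y‖ₑ) ^ (2 * -b))
    (by fun_prop) (by fun_prop) (fun ξ s => ?_) p
  rw [lintegral_lintegral_swap (by fun_prop)]
  calc ∫⁻ y : ℝ, ∫⁻ x : ℝ, (1 + ‖s - x ^ 3 - y ^ 3 - (ξ - x - y) ^ 3‖ₑ) ^ (2 * -b)
      = ∫⁻ y : ℝ, ∫⁻ a : ℝ, (1 + ‖s - y ^ 3 - (a - y) ^ 3 - (ξ - a) ^ 3‖ₑ) ^ (2 * -b) := by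
        refine lintegral_congr fun y => ?_
        rw [← lintegral_sub_right_eq_self _ y]
        refine lintegral_congr fun a => ?_
        congr 3
        ring
    _ ≤ ∫⁻ y : ℝ, ∫⁻ a : ℝ, (1 + ‖s - y ^ 3 - (a - y) ^ 3 - (ξ - a) ^ 3‖ₑ)⁻¹ := by
        gcongr with y a
        rw [← ENNReal.rpow_neg_one]
        exact ENNReal.rpow_le_rpow_of_exponent_le le_self_add (by linarith)
    _ ≤ C := by
        rw [lintegral_lintegral_swap (by fun_prop)]
        exact hC ξ s

lemma exists_lintegral_sq_lconvolution_le {b : ℝ} (hb : 1 / 2 < b) :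
    ∃ C : ℝ≥0, ∀ f : ℝ × ℝ → ℝ≥0∞, Measurable f →
      ∫⁻ p, (f ⋆ₗ f ⋆ₗ f) p ^ 2 ≤ C * (∫⁻ p, airyWeight b p * f p ^ 2) ^ 3 := by
  obtain ⟨C, hC⟩ := exists_lconvolution_airyWeight_neg_le hb
  refine ⟨C, fun f hf => lintegral_sq_lconvolution_le (by fun_prop) (by fun_prop) (fun p => ?_) hC⟩
  rw [← mul_assoc, airyWeight_neg_mul_airyWeight, one_mul]

lemma exists_lintegral_enorm_fourier_pow_six_le {b : ℝ} (hb : 1 / 2 < b) :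
    ∃ C : ℝ≥0, ∀ g : 𝓢(WithLp 2 (ℝ × ℝ), ℂ), ∫⁻ x, ‖𝓕 g x‖ₑ ^ 6 ≤
      C * (∫⁻ p, airyWeight b p * ‖g (WithLp.toLp 2 p)‖ₑ ^ 2) ^ 3 := by
  obtain ⟨C, hC⟩ := exists_lintegral_sq_lconvolution_le hb
  refine ⟨C, fun g => (lintegral_enorm_fourier_pow_six_le g).trans ?_⟩
  have h_toLp : MeasurePreserving (WithLp.addEquiv 2 (ℝ × ℝ)).symm volume volume :=
    WithLp.volume_preserving_toLp ℝ ℝ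
  have h_meas : Measurable fun y => ‖g y‖ₑ := g.continuous.measurable.enorm
  have h_bound := hC _ (h_meas.comp h_toLp.measurable)
  rw [lconvolution_comp_of_measurePreserving h_toLp h_meas h_meas,
    lconvolution_comp_of_measurePreserving h_toLp h_meas (by fun_prop)] at h_bound
  exact (h_toLp.lintegral_comp (by fun_prop)).symm.trans_le h_bound

/-- The Fourier transform `û(ξ, τ) = ∫ exp (-i (x ξ + t τ)) u(x, t)` at `p = (ξ, τ)`, without
the factor `2π` in the phase that Mathlib's `𝓕` has, and on `ℝ × ℝ`, which carries the sup norm. -/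
noncomputable def spaceTimeFourier (u : ℝ × ℝ → ℂ) (p : ℝ × ℝ) : ℂ :=
  ∫ q : ℝ × ℝ, Complex.exp (-Complex.I * (q.1 * p.1 + q.2 * p.2)) * u q

lemma exists_fourier_eq_comp_smul (u : 𝓢(ℝ × ℝ, ℂ)) :
    ∃ g : 𝓢(WithLp 2 (ℝ × ℝ), ℂ),
      (∀ x, 𝓕 g (WithLp.toLp 2 x) = u (-(2 * Real.pi) • x)) ∧
        ∀ p, g (WithLp.toLp 2 p) = (((2 * Real.pi) ^ 2)⁻¹ : ℝ) • spaceTimeFourier u p := by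
  let e : WithLp 2 (ℝ × ℝ) ≃L[ℝ] ℝ × ℝ := (WithLp.prodContinuousLinearEquiv 2 ℝ ℝ ℝ).trans
    (ContinuousLinearEquiv.smulLeft (Units.mk0 (-(2 * Real.pi)) (by simp [Real.pi_ne_zero])))
  let v : 𝓢(WithLp 2 (ℝ × ℝ), ℂ) := SchwartzMap.compCLMOfContinuousLinearEquiv ℂ e u
  have hv (x : ℝ × ℝ) : v (WithLp.toLp 2 x) = u (-(2 * Real.pi) • x) := rfl
  refine ⟨𝓕⁻ v, fun x => by rw [FourierTransform.fourier_fourierInv_eq, hv], fun p => ?_⟩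
  rw [SchwartzMap.fourierInv_coe, Real.fourierInv_eq',
    ← (WithLp.volume_preserving_toLp ℝ ℝ).integral_comp
      (MeasurableEquiv.toLp 2 (ℝ × ℝ)).measurableEmbedding, spaceTimeFourier]
  have h_comp := Measure.integral_comp_smul volume (fun q : ℝ × ℝ =>
    Complex.exp (-Complex.I * (q.1 * p.1 + q.2 * p.2)) * u q) (-(2 * Real.pi))
  rw [Module.finrank_prod, Module.finrank_self, one_add_one_eq_two, neg_sq,
    abs_of_nonneg (by positivity)] at h_comp
  refine Eq.trans (integral_congr_ae (ae_of_all _ fun x => ?_)) h_comp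
  simp only [hv, smul_eq_mul, WithLp.prod_inner_apply, RCLike.inner_apply, conj_trivial,
    Prod.smul_fst, Prod.smul_snd]
  congr 2
  push_cast
  ring

lemma exists_lintegral_enorm_pow_six_le {b : ℝ} (hb : 1 / 2 < b) :
    ∃ C : ℝ≥0, ∀ u : 𝓢(ℝ × ℝ, ℂ), ∫⁻ x, ‖u x‖ₑ ^ 6 ≤
      C * (∫⁻ p, airyWeight b p * ‖spaceTimeFourier u p‖ₑ ^ 2) ^ 3 := by
  obtain ⟨C, hC⟩ := exists_lintegral_enorm_fourier_pow_six_le hb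
  refine ⟨((2 * Real.pi) ^ 2).toNNReal * C, fun u => ?_⟩
  obtain ⟨g, hg_fourier, hg⟩ := exists_fourier_eq_comp_smul u
  have h_scale : ∫⁻ x, ‖𝓕 g x‖ₑ ^ 6 =
      ENNReal.ofReal ((2 * Real.pi) ^ 2)⁻¹ * ∫⁻ x, ‖u x‖ₑ ^ 6 := by
    rw [← (WithLp.volume_preserving_toLp ℝ ℝ).lintegral_comp_emb
      (MeasurableEquiv.toLp 2 (ℝ × ℝ)).measurableEmbedding]
    simp only [hg_fourier]
    rw [lintegral_comp_smul volume (fun x => ‖u x‖ₑ ^ 6) (by simp [Real.pi_ne_zero]),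
      Module.finrank_prod, Module.finrank_self, one_add_one_eq_two, neg_sq,
      abs_of_nonneg (by positivity)]
  have h_le (p : ℝ × ℝ) : ‖g (WithLp.toLp 2 p)‖ₑ ≤ ‖spaceTimeFourier u p‖ₑ := by
    rw [hg, enorm_smul]
    refine mul_le_of_le_one_left' ?_
    rw [Real.enorm_of_nonneg (by positivity), ENNReal.ofReal_le_one]
    exact inv_le_one_of_one_le₀ (one_le_pow₀ (by linarith [Real.pi_gt_three]))
  calc ∫⁻ x, ‖u x‖ₑ ^ 6 = ENNReal.ofReal ((2 * Real.pi) ^ 2) * ∫⁻ x, ‖𝓕 g x‖ₑ ^ 6 := by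
        rw [h_scale, ← mul_assoc, ← ENNReal.ofReal_mul (by positivity),
          mul_inv_cancel₀ (by positivity), ENNReal.ofReal_one, one_mul]
    _ ≤ ENNReal.ofReal ((2 * Real.pi) ^ 2) *
          (C * (∫⁻ p, airyWeight b p * ‖spaceTimeFourier u p‖ₑ ^ 2) ^ 3) := by
        gcongr
        refine (hC g).trans ?_
        gcongr with p
        exact h_le p
    _ = _ := by rw [ENNReal.coe_mul, mul_assoc, ENNReal.ofReal]

lemma one_add_abs_sub_cube_le (p : ℝ × ℝ) : 1 + |p.2 - p.1 ^ 3| ≤ (1 + ‖p‖) ^ 3 := by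
  calc 1 + |p.2 - p.1 ^ 3| ≤ 1 + (‖p‖ + ‖p‖ ^ 3) := by
        gcongr
        refine (norm_sub_le p.2 (p.1 ^ 3)).trans ?_
        rw [norm_pow]
        gcongr
        exacts [norm_snd_le p, norm_fst_le p]
    _ ≤ (1 + ‖p‖) ^ 3 := by nlinarith [norm_nonneg p, sq_nonneg ‖p‖]

lemma integrable_one_add_abs_rpow_mul_norm_sq_spaceTimeFourier (b : ℝ) (u : 𝓢(ℝ × ℝ, ℂ)) :
    Integrable fun p : ℝ × ℝ =>
      (1 + |p.2 - p.1 ^ 3|) ^ (2 * b) * ‖spaceTimeFourier u p‖ ^ 2 := by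
  obtain ⟨g, -, hg⟩ := exists_fourier_eq_comp_smul u
  obtain ⟨N, hN⟩ := exists_nat_ge (2 * b)
  let G : 𝓢(ℝ × ℝ, ℂ) := (2 * Real.pi) ^ 2 • SchwartzMap.compCLMOfContinuousLinearEquiv ℂ
    (WithLp.prodContinuousLinearEquiv 2 ℝ ℝ ℝ).symm g
  have hG : spaceTimeFourier u = G := by
    ext p
    have h_apply : G p = (2 * Real.pi) ^ 2 • g (WithLp.toLp 2 p) := rfl
    rw [h_apply, hg, smul_inv_smul₀ (by positivity)]
  rw [hG]
  refine integrable_mul_norm_sq_of_norm_le G (k := 3 * N)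
    (Measurable.aestronglyMeasurable (by fun_prop)) fun p => ?_
  rw [Real.norm_of_nonneg (by positivity), pow_mul]
  calc (1 + |p.2 - p.1 ^ 3|) ^ (2 * b) ≤ (1 + |p.2 - p.1 ^ 3|) ^ (N : ℝ) :=
        Real.rpow_le_rpow_of_exponent_le (le_add_of_nonneg_right (abs_nonneg _)) hN
    _ ≤ ((1 + ‖p‖) ^ 3) ^ N := by
        rw [Real.rpow_natCast]
        gcongr
        exact one_add_abs_sub_cube_le p

lemma lintegral_airyWeight_mul_enorm_sq_spaceTimeFourier (b : ℝ) (u : 𝓢(ℝ × ℝ, ℂ)) :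
    ∫⁻ p, airyWeight b p * ‖spaceTimeFourier u p‖ₑ ^ 2 =
      ENNReal.ofReal (∫ p : ℝ × ℝ,
        (1 + |p.2 - p.1 ^ 3|) ^ (2 * b) * ‖spaceTimeFourier u p‖ ^ 2) := by
  rw [ofReal_integral_eq_lintegral_ofReal
    (integrable_one_add_abs_rpow_mul_norm_sq_spaceTimeFourier b u)
    (ae_of_all _ fun p => by positivity)]
  refine lintegral_congr fun p => ?_
  rw [ENNReal.ofReal_mul (by positivity), ENNReal.ofReal_pow (norm_nonneg _), ofReal_norm,
    ← ENNReal.ofReal_rpow_of_pos (by positivity), ENNReal.ofReal_add one_pos.le (abs_nonneg _),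
    ENNReal.ofReal_one, airyWeight, Real.enorm_eq_ofReal_abs]

lemma exists_eLpNorm_six_le {b : ℝ} (hb : 1 / 2 < b) :
    ∃ C > 0, ∀ u : 𝓢(ℝ × ℝ, ℂ), eLpNorm u 6 volume ≤ ENNReal.ofReal C *
      (∫⁻ p, airyWeight b p * ‖spaceTimeFourier u p‖ₑ ^ 2) ^ (1 / 2 : ℝ) := by
  obtain ⟨C, hC⟩ := exists_lintegral_enorm_pow_six_le hb
  refine ⟨(C : ℝ) ^ (1 / 6 : ℝ) + 1, by positivity, fun u => ?_⟩
  set X := ∫⁻ p, airyWeight b p * ‖spaceTimeFourier u p‖ₑ ^ 2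
  calc eLpNorm u 6 volume = (∫⁻ x, ‖u x‖ₑ ^ 6) ^ (1 / 6 : ℝ) := by
        simpa using eLpNorm_nnreal_eq_lintegral (f := u) (μ := volume) (p := 6) (by norm_num)
    _ ≤ (C * X ^ 3) ^ (1 / 6 : ℝ) := by
        gcongr
        exact hC u
    _ = ENNReal.ofReal (C ^ (1 / 6 : ℝ)) * X ^ (1 / 2 : ℝ) := by
        rw [ENNReal.mul_rpow_of_nonneg _ _ (by norm_num), ← ENNReal.rpow_natCast_mul,
          ← ENNReal.ofReal_rpow_of_nonneg C.coe_nonneg (by norm_num), ENNReal.ofReal_coe_nnreal]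
        norm_num
    _ ≤ ENNReal.ofReal (C ^ (1 / 6 : ℝ) + 1) * X ^ (1 / 2 : ℝ) := by
        gcongr
        exact le_add_of_nonneg_right zero_le_one

end Airy

/-- Strichartz-type estimate for the Airy Bourgain norm, case `p = 6`:
`‖u‖_{L⁶(ℝ²)} ≤ C ‖u‖_{X^{0,b}}` for `b > 1/2`. -/
theorem strichartz_L6 (b : ℝ) (hb : 1 / 2 < b) :
    ∃ C > 0, ∀ u : SchwartzMap (ℝ × ℝ) ℂ,
      eLpNorm (fun p : ℝ × ℝ => u p) 6 volume ≤
        ENNReal.ofReal (C *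
          (∫ p : ℝ × ℝ, (1 + |p.2 - p.1 ^ 3|) ^ (2 * b) *
            ‖∫ q : ℝ × ℝ, Complex.exp (-Complex.I * (q.1 * p.1 + q.2 * p.2)) * u q‖ ^ 2) ^
          ((1 : ℝ) / 2)) := by
  obtain ⟨C, hC_pos, hC⟩ := exists_eLpNorm_six_le hb
  refine ⟨C, hC_pos, fun u => (hC u).trans_eq ?_⟩
  rw [lintegral_airyWeight_mul_enorm_sq_spaceTimeFourier, ENNReal.ofReal_mul hC_pos.le,
    ENNReal.ofReal_rpow_of_nonneg (integral_nonneg fun p => by positivity) (by norm_num)]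
  rfl
end
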